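/- arXiv:math/0306246 — 3 statements merged into one kernel-verified Lean document; each statement's English description precedes it below -/
import Mathlib

section
/- Let V_r^+ := φ({v ∈ C^{r+1}_* : v_{r+1} = +1}) and let Z_{r,m}^+ be an m-element subset of V_r^+ chosen uniformly at random. Then α(r+1, m) = E[α(Z_{r,m}^+)], where for a fixed finite set S ⊂ ℝ^r, α(S) := P[0 ∉ conv{ε_s · s : s ∈ S}] with ε ∈ {−1,+1}^S chosen uniformly at random. -/
open Finset Filter MeasureTheory

open scoped Classical

noncomputable section

/-- The vertex set `{0,1}^d` of the 0/1-cube, as a finite subset of `ℝ^d`. -/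
def cube01 (d : ℕ) : Finset (Fin d → ℝ) :=
  (Finset.univ : Finset (Fin d → Bool)).image (fun f i => if f i then 1 else 0)

/-- The vertex set `{-1,+1}^d` of the `±1`-cube, as a finite subset of `ℝ^d`. -/
def pmCube (d : ℕ) : Finset (Fin d → ℝ) :=
  (Finset.univ : Finset (Fin d → Bool)).image (fun f i => if f i then 1 else -1)

/-- The all-one vector `𝟙 ∈ ℝ^d`. -/
def allOne (d : ℕ) : Fin d → ℝ := fun _ => 1

/-- `C^d_* = {-1,+1}^d \ {-𝟙, 𝟙}`. -/
def pmCubeStar (d : ℕ) : Finset (Fin d → ℝ) :=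
  (pmCube d) \ {-(allOne d), allOne d}

/-- `{v,w}` spans an edge (a one-dimensional face) of the polytope `P`:
`v ≠ w` and the segment `[v,w]` is an (exposed) face of `P`. -/
def IsEdge {d : ℕ} (P : Set (Fin d → ℝ)) (v w : Fin d → ℝ) : Prop :=
  v ≠ w ∧ IsExposed ℝ P (segment ℝ v w)

/-- The number of edges of the graph of the polytope `conv X`. -/
noncomputable def edgeCount {d : ℕ} (X : Finset (Fin d → ℝ)) : ℕ :=
  ((X.powersetCard 2).filter (fun e =>
      ∃ v w, e = {v, w} ∧ IsEdge (convexHull ℝ (X : Set (Fin d → ℝ))) v w)).card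

/-- The density of the graph of the polytope `conv X` (whose vertex set is `X`
when `X` consists of 0/1- or `±1`-points): number of edges divided by `C(|X|,2)`. -/
noncomputable def graphDensity {d : ℕ} (X : Finset (Fin d → ℝ)) : ℝ :=
  (edgeCount X : ℝ) / (X.card.choose 2 : ℝ)

/-- The expected graph-density of the convex hull of a uniformly random
`n`-element subset of `{0,1}^d`. -/
noncomputable def expDensity (d n : ℕ) : ℝ :=
  (∑ X ∈ (cube01 d).powersetCard n, graphDensity X) /
    (((cube01 d).powersetCard n).card : ℝ)

/-- The Hamming distance of `v, w ∈ ℝ^d`. -/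
def hdist {d : ℕ} (v w : Fin d → ℝ) : ℕ :=
  (Finset.univ.filter (fun i => v i ≠ w i)).card

/-- `C(v,w)`: the points of the `±1`-cube agreeing with `v` and `w` wherever these agree
(the vertex set of the smallest face of the cube containing `v` and `w`). -/
def cubeFace {d : ℕ} (v w : Fin d → ℝ) : Finset (Fin d → ℝ) :=
  (pmCube d).filter (fun x => ∀ i, v i = w i → x i = v i)

/-- `C_*(v,w) = C(v,w) \ {v,w}`. -/
def cubeFaceStar {d : ℕ} (v w : Fin d → ℝ) : Finset (Fin d → ℝ) :=
  (cubeFace v w) \ {v, w}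

/-- The long-edge probability `τ(k,m)`: the probability that for a uniformly random
`m`-element subset `Y ⊆ C^k_*`, `conv Y ∩ conv{-𝟙,𝟙} = ∅`. -/
noncomputable def tau (k m : ℕ) : ℝ :=
  ((((pmCubeStar k).powersetCard m).filter (fun Y =>
      convexHull ℝ (Y : Set (Fin k → ℝ)) ∩ segment ℝ (-(allOne k)) (allOne k) = ∅)).card : ℝ) /
    ((((pmCubeStar k).powersetCard m)).card : ℝ)

/-- `Y ∩ (-Y) = ∅`. -/
def NoAntipodal {k : ℕ} (Y : Finset (Fin k → ℝ)) : Prop := ∀ y ∈ Y, -y ∉ Y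

/-- `α(k,m)`: the conditional probability that `conv Y ∩ conv{-𝟙,𝟙} = ∅`
given `Y ∩ (-Y) = ∅`, for a uniformly random `m`-element subset `Y ⊆ C^k_*`. -/
noncomputable def alpha (k m : ℕ) : ℝ :=
  ((((pmCubeStar k).powersetCard m).filter (fun (Y : Finset (Fin k → ℝ)) =>
      convexHull ℝ (Y : Set (Fin k → ℝ)) ∩ segment ℝ (-(allOne k)) (allOne k) = ∅ ∧
        NoAntipodal Y)).card : ℝ) /
    ((((pmCubeStar k).powersetCard m).filter (fun Y => NoAntipodal Y)).card : ℝ)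

/-- The sample space for a uniformly random `n`-element subset `X ⊆ {-1,+1}^d`
together with a uniformly random `2`-element subset `{v,w} ⊆ X`. -/
def edgeSpace (d n : ℕ) : Finset (Finset (Fin d → ℝ) × Finset (Fin d → ℝ)) :=
  (((pmCube d).powersetCard n) ×ˢ ((pmCube d).powersetCard 2)).filter (fun p => p.2 ⊆ p.1)

/-- The event that the chosen pair `{v,w}` is an edge of `conv X`. -/
def EdgeEvent {d : ℕ} (p : Finset (Fin d → ℝ) × Finset (Fin d → ℝ)) : Prop :=
  ∃ v w, p.2 = {v, w} ∧ IsEdge (convexHull ℝ (p.1 : Set (Fin d → ℝ))) v w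

/-- The event that the chosen pair `{v,w}` satisfies `dist(v,w) = k`. -/
def DistEvent {d : ℕ} (k : ℕ) (p : Finset (Fin d → ℝ) × Finset (Fin d → ℝ)) : Prop :=
  ∃ v w, v ≠ w ∧ p.2 = {v, w} ∧ hdist v w = k

/-- The event that the chosen pair `{v,w}` satisfies `dist(v,w) = k` and
`#(X ∩ C_*(v,w)) = m`. -/
def DistCapEvent {d : ℕ} (k m : ℕ) (p : Finset (Fin d → ℝ) × Finset (Fin d → ℝ)) : Prop :=
  ∃ v w, v ≠ w ∧ p.2 = {v, w} ∧ hdist v w = k ∧ (p.1 ∩ cubeFaceStar v w).card = m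

/-- The edge probability `π(d,n)`. -/
noncomputable def piEdge (d n : ℕ) : ℝ :=
  (((edgeSpace d n).filter (fun p => EdgeEvent p)).card : ℝ) / ((edgeSpace d n).card : ℝ)

/-- The conditional edge probability `π_k(d,n)` given `dist(v,w) = k`. -/
noncomputable def piEdgeK (d n k : ℕ) : ℝ :=
  (((edgeSpace d n).filter (fun p => EdgeEvent p ∧ DistEvent k p)).card : ℝ) /
    (((edgeSpace d n).filter (fun p => DistEvent k p)).card : ℝ)

/-- `φ : ℝ^{r+1} → ℝ^r`: the orthogonal projection onto the hyperplane
`H_𝟙 = {x : 𝟙ᵀx = 0}` (namely `x ↦ x - ((𝟙ᵀx)/(r+1))·𝟙`), followed by the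
projection to the first `r` coordinates. -/
noncomputable def phi (r : ℕ) (x : Fin (r + 1) → ℝ) : Fin r → ℝ :=
  fun i => x i.castSucc - (∑ j, x j) / (r + 1 : ℝ)

/-- The vector configuration `V_r = φ(C^{r+1}_*)`. -/
noncomputable def Vr (r : ℕ) : Finset (Fin r → ℝ) := (pmCubeStar (r + 1)).image (phi r)

/-- The half configuration `V_r^+ = φ({v ∈ C^{r+1}_* : v_{r+1} = +1})`. -/
noncomputable def VrPlus (r : ℕ) : Finset (Fin r → ℝ) :=
  (((pmCubeStar (r + 1)).filter (fun v => v (Fin.last r) = 1))).image (phi r)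

/-- The number of sign vectors `ε ∈ {-1,+1}^S` with `0 ∉ conv{ε_s · s : s ∈ S}`. -/
noncomputable def signCount {r : ℕ} (S : Finset (Fin r → ℝ)) : ℕ :=
  ((Finset.univ : Finset (↥S → Bool)).filter (fun ε =>
      (0 : Fin r → ℝ) ∉ convexHull ℝ
        (Set.range fun s : ↥S => (if ε s then (1 : ℝ) else -1) • (s : Fin r → ℝ)))).card

/-- `α(S)`: the probability that `0 ∉ conv{ε_s · s : s ∈ S}` for a uniformly random
sign vector `ε ∈ {-1,+1}^S`. -/
noncomputable def alphaSet {r : ℕ} (S : Finset (Fin r → ℝ)) : ℝ :=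
  (signCount S : ℝ) / ((Finset.univ : Finset (↥S → Bool)).card : ℝ)

/-- The complement `ℝ^r \ ⋃_{s ∈ S} H(s)` of the hyperplane arrangement `ℋ(S)`. -/
def arrComplement {r : ℕ} (S : Finset (Fin r → ℝ)) : Set (Fin r → ℝ) :=
  {x | ∀ s ∈ S, ∑ i, s i * x i ≠ 0}

/-- `χ(S)`: the number of chambers (connected components of the complement)
of the hyperplane arrangement `ℋ(S)`. -/
noncomputable def chi {r : ℕ} (S : Finset (Fin r → ℝ)) : ℕ :=
  Nat.card (ConnectedComponents ↥(arrComplement S))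

/-- `b(p,q) = ∑_{i=0}^p C(q,i)`. -/
def bFn (p q : ℕ) : ℕ := ∑ i ∈ Finset.range (p + 1), q.choose i

/-! Because `φ` is linear with kernel `ℝ𝟙` and the cube lies between `-𝟙` and `𝟙` coordinatewise,
the hull of `Y ⊆ C^{r+1}_*` misses the diagonal `conv{-𝟙, 𝟙}` iff the hull of `φ(Y)` misses the
origin. Moreover `φ` is odd and injective on `C^{r+1}_*`, with image `V_r = V_r^+ ⊔ -V_r^+`. So the
antipodal-free `m`-subsets of `C^{r+1}_*` correspond to the `m`-subsets of `V_r^+` together with a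
choice of signs; each subset carries the same number `2^m` of sign choices, hence conditioning on
`Y ∩ (-Y) = ∅` amounts to choosing `Z ⊆ V_r^+` and the signs uniformly and independently. -/

section AntipodalFree

open scoped Pointwise

/-- `Y ∩ (-Y) = ∅`: this is `NoAntipodal` over an arbitrary type with a negation. -/
def AntipodalFree {α : Type*} [Neg α] (Y : Finset α) : Prop := ∀ y ∈ Y, -y ∉ Y

/-- The antipodal-free `m`-element subsets of `A`: the sample space underlying `alpha`. -/
def antipodalFreeSubsets {α : Type*} [Neg α] (A : Finset α) (m : ℕ) : Finset (Finset α) :=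
  (A.powersetCard m).filter AntipodalFree

lemma AntipodalFree.mono {α : Type*} [Neg α] {X Y : Finset α} (hY : AntipodalFree Y)
    (hXY : X ⊆ Y) : AntipodalFree X :=
  fun x hx hx' => hY x (hXY hx) (hXY hx')

lemma mem_antipodalFreeSubsets {α : Type*} [Neg α] {A Y : Finset α} {m : ℕ} :
    Y ∈ antipodalFreeSubsets A m ↔ (Y ⊆ A ∧ #Y = m) ∧ AntipodalFree Y := by
  rw [antipodalFreeSubsets, mem_filter, mem_powersetCard]

lemma antipodalFree_image_iff {α β : Type*} [Neg α] [Neg β] [DecidableEq β] {f : α → β}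
    {A Y : Finset α} (hodd : ∀ x, f (-x) = -f x) (hinj : Set.InjOn f A)
    (hA : ∀ x ∈ A, -x ∈ A) (hY : Y ⊆ A) :
    AntipodalFree (Y.image f) ↔ AntipodalFree Y := by
  have neg_mem_image (y : α) (hy : y ∈ Y) : -f y ∈ Y.image f ↔ -y ∈ Y := by
    rw [← hodd, ← mem_coe, coe_image, hinj.mem_image_iff (by simpa using hY) (hA y (hY hy)),
      mem_coe]
  simp only [AntipodalFree, forall_mem_image]
  exact forall₂_congr fun y hy => not_congr (neg_mem_image y hy)

lemma antipodalFreeSubsets_image {α β : Type*} [Neg α] [Neg β] [DecidableEq β] {f : α → β}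
    {A : Finset α} (hodd : ∀ x, f (-x) = -f x) (hinj : Set.InjOn f A)
    (hA : ∀ x ∈ A, -x ∈ A) (m : ℕ) :
    antipodalFreeSubsets (A.image f) m = (antipodalFreeSubsets A m).image (Finset.image f) := by
  ext W
  simp only [mem_image, mem_antipodalFreeSubsets]
  constructor
  · rintro ⟨⟨hWA, hcard⟩, hfree⟩
    obtain ⟨Y, hYA, rfl⟩ := subset_image_iff.mp hWA
    have hY : Y ⊆ A := mod_cast hYA
    rw [card_image_of_injOn (hinj.mono hYA)] at hcard
    exact ⟨Y, ⟨⟨hY, hcard⟩, (antipodalFree_image_iff hodd hinj hA hY).mp hfree⟩, rfl⟩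
  · rintro ⟨Y, ⟨⟨hY, hcard⟩, hfree⟩, rfl⟩
    exact ⟨⟨image_subset_image hY, (card_image_of_injOn (hinj.mono (mod_cast hY))).trans hcard⟩,
      (antipodalFree_image_iff hodd hinj hA hY).mpr hfree⟩

lemma sum_antipodalFreeSubsets_image {α β M : Type*} [Neg α] [Neg β] [DecidableEq β]
    [AddCommMonoid M] {f : α → β} {A : Finset α} (hodd : ∀ x, f (-x) = -f x)
    (hinj : Set.InjOn f A) (hA : ∀ x ∈ A, -x ∈ A) (m : ℕ) (g : Finset β → M) :
    ∑ W ∈ antipodalFreeSubsets (A.image f) m, g W =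
      ∑ Y ∈ antipodalFreeSubsets A m, g (Y.image f) := by
  rw [antipodalFreeSubsets_image hodd hinj hA, sum_image]
  intro Y hY Y' hY' h
  have subset_of_mem {Y : Finset α} (hY : Y ∈ (antipodalFreeSubsets A m : Set (Finset α))) :
      (Y : Set α) ⊆ A := mod_cast (mem_antipodalFreeSubsets.mp hY).1.1
  refine coe_injective ((hinj.image_eq_image_iff (subset_of_mem hY) (subset_of_mem hY')).mp ?_)
  rw [← coe_image, ← coe_image, h]

variable {α : Type*} [InvolutiveNeg α] [DecidableEq α]

/-- The set `{ε_x x : x ∈ X}`, where the Boolean `ε x` encodes the sign `ε_x` as in `signCount`. -/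
def signedImage (X : Finset α) (ε : X → Bool) : Finset α :=
  univ.image fun x : X => if ε x then (x : α) else -x

/-- The elements of `H` that occur in `Y` up to sign; this recovers `X` from `signedImage X ε`. -/
def unsignedPart (H Y : Finset α) : Finset α := H.filter fun x => x ∈ Y ∨ -x ∈ Y

variable {H X Y : Finset α}

lemma signedImage_subset_union_neg (ε : X → Bool) : signedImage X ε ⊆ X ∪ -X := by
  simp only [signedImage, image_subset_iff, mem_univ, forall_const]
  intro x
  split_ifs <;> simp

lemma coe_mem_signedImage_iff (hX : AntipodalFree X) (ε : X → Bool) (x : X) :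
    (x : α) ∈ signedImage X ε ↔ ε x = true := by
  simp only [signedImage, mem_image, mem_univ, true_and]
  refine ⟨?_, fun h => ⟨x, if_pos h⟩⟩
  rintro ⟨z, hz⟩
  split_ifs at hz with h
  · rwa [← Subtype.ext hz]
  · exact absurd (hz ▸ x.2) (hX z z.2)

lemma neg_coe_mem_signedImage_iff (hX : AntipodalFree X) (ε : X → Bool) (x : X) :
    -(x : α) ∈ signedImage X ε ↔ ε x = false := by
  simp only [signedImage, mem_image, mem_univ, true_and]
  refine ⟨?_, fun h => ⟨x, by simp [h]⟩⟩
  rintro ⟨z, hz⟩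
  split_ifs at hz with h
  · exact absurd (hz ▸ z.2) (hX x x.2)
  · rw [← Subtype.ext (neg_injective hz)]
    exact Bool.eq_false_of_not_eq_true h

lemma signedImage_injective (hX : AntipodalFree X) : Function.Injective (signedImage X) := by
  intro ε δ h
  funext x
  rw [Bool.eq_iff_iff, ← coe_mem_signedImage_iff hX, ← coe_mem_signedImage_iff hX, h]

lemma antipodalFree_signedImage (hX : AntipodalFree X) (ε : X → Bool) :
    AntipodalFree (signedImage X ε) := by
  have not_both (x : X) : ¬(-(x : α) ∈ signedImage X ε ∧ (x : α) ∈ signedImage X ε) := by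
    simp [coe_mem_signedImage_iff hX, neg_coe_mem_signedImage_iff hX]
  intro y hy hy'
  obtain ⟨x, -, rfl⟩ := mem_image.mp hy
  split_ifs at hy hy'
  · exact not_both x ⟨hy', hy⟩
  · exact not_both x ⟨hy, neg_neg (x : α) ▸ hy'⟩

lemma card_signedImage (hX : AntipodalFree X) (ε : X → Bool) : #(signedImage X ε) = #X := by
  rw [signedImage, card_image_of_injective, card_univ, Fintype.card_coe]
  intro x z (h : (if ε x then (x : α) else -x) = if ε z then (z : α) else -z)
  apply Subtype.ext
  split_ifs at h
  · exact h
  · exact absurd (h ▸ x.2) (hX z z.2)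
  · exact absurd (h ▸ z.2) (hX x x.2)
  · exact neg_injective h

lemma unsignedPart_signedImage (hH : AntipodalFree H) (hXH : X ⊆ H) (ε : X → Bool) :
    unsignedPart H (signedImage X ε) = X := by
  have hX : AntipodalFree X := hH.mono hXH
  ext x
  simp only [unsignedPart, mem_filter]
  constructor
  · rintro ⟨hxH, hx⟩
    have hmem : x ∈ X ∨ -x ∈ X := by
      rcases hx with h | h <;> simpa [or_comm] using signedImage_subset_union_neg ε h
    exact hmem.resolve_right fun h => hH x hxH (hXH h)
  · intro hx
    rw [coe_mem_signedImage_iff hX ε ⟨x, hx⟩, neg_coe_mem_signedImage_iff hX ε ⟨x, hx⟩]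
    exact ⟨hXH hx, Bool.eq_false_or_eq_true _⟩

lemma signedImage_unsignedPart (hYH : Y ⊆ H ∪ -H) (hY : AntipodalFree Y) :
    signedImage (unsignedPart H Y) (fun x => decide ((x : α) ∈ Y)) = Y := by
  ext y
  simp only [signedImage, mem_image, mem_univ, true_and, decide_eq_true_eq]
  constructor
  · rintro ⟨⟨x, hx⟩, rfl⟩
    have hxY : x ∈ Y ∨ -x ∈ Y := (mem_filter.mp hx).2
    split_ifs with h
    exacts [h, hxY.resolve_left h]
  · intro hy
    rcases mem_union.mp (hYH hy) with hyH | hyH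
    · exact ⟨⟨y, mem_filter.mpr ⟨hyH, .inl hy⟩⟩, if_pos hy⟩
    · refine ⟨⟨-y, mem_filter.mpr ⟨mem_neg'.mp hyH, .inr ?_⟩⟩, ?_⟩
      · rwa [neg_neg]
      · rw [if_neg (hY y hy), neg_neg]

lemma unsignedPart_mem_powersetCard {m : ℕ} (hH : AntipodalFree H)
    (hY : Y ∈ antipodalFreeSubsets (H ∪ -H) m) : unsignedPart H Y ∈ H.powersetCard m := by
  obtain ⟨⟨hYH, hcard⟩, hfree⟩ := mem_antipodalFreeSubsets.mp hY
  have hsub : unsignedPart H Y ⊆ H := filter_subset _ _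
  have hX : AntipodalFree (unsignedPart H Y) := hH.mono hsub
  rw [mem_powersetCard, ← hcard]
  exact ⟨hsub, by rw [← card_signedImage hX, signedImage_unsignedPart hYH hfree]⟩

lemma filter_unsignedPart_eq_image_signedImage {m : ℕ} (hH : AntipodalFree H)
    (hX : X ∈ H.powersetCard m) :
    (antipodalFreeSubsets (H ∪ -H) m).filter (fun Y => unsignedPart H Y = X) =
      univ.image (signedImage X) := by
  obtain ⟨hXH, hXcard⟩ := mem_powersetCard.mp hX
  have hfree : AntipodalFree X := hH.mono hXH
  ext Y
  simp only [mem_filter, mem_antipodalFreeSubsets, mem_image, mem_univ, true_and]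
  constructor
  · rintro ⟨⟨⟨hYH, -⟩, hY⟩, rfl⟩
    exact ⟨_, signedImage_unsignedPart hYH hY⟩
  · rintro ⟨ε, rfl⟩
    have hsub : signedImage X ε ⊆ H ∪ -H :=
      (signedImage_subset_union_neg ε).trans (union_subset_union hXH (neg_subset_neg hXH))
    exact ⟨⟨⟨hsub, (card_signedImage hfree ε).trans hXcard⟩, antipodalFree_signedImage hfree ε⟩,
      unsignedPart_signedImage hH hXH ε⟩

lemma sum_antipodalFreeSubsets_union_neg {M : Type*} [AddCommMonoid M] (hH : AntipodalFree H)
    (m : ℕ) (g : Finset α → M) :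
    ∑ Y ∈ antipodalFreeSubsets (H ∪ -H) m, g Y =
      ∑ X ∈ H.powersetCard m, ∑ ε : X → Bool, g (signedImage X ε) := by
  rw [← sum_fiberwise_of_maps_to fun Y hY => unsignedPart_mem_powersetCard hH hY]
  refine sum_congr rfl fun X hX => ?_
  have hfree : AntipodalFree X := hH.mono (mem_powersetCard.mp hX).1
  rw [filter_unsignedPart_eq_image_signedImage hH hX,
    sum_image (signedImage_injective hfree).injOn]

end AntipodalFree

lemma smul_mem_segment_neg_self {𝕜 E : Type*} [Field 𝕜] [LinearOrder 𝕜] [IsStrictOrderedRing 𝕜]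
    [AddCommGroup E] [Module 𝕜 E] {c : 𝕜} (hc : c ∈ Set.Icc (-1) 1) (v : E) :
    c • v ∈ segment 𝕜 (-v) v := by
  obtain ⟨hc_ge, hc_le⟩ := hc
  refine ⟨(1 - c) / 2, (1 + c) / 2, by linarith, by linarith, by ring, ?_⟩
  module

section Cube

variable {d : ℕ} {x : Fin d → ℝ}

lemma mem_pmCube_iff : x ∈ pmCube d ↔ ∀ i, x i = 1 ∨ x i = -1 := by
  simp only [pmCube, mem_image, mem_univ, true_and]
  constructor
  · rintro ⟨b, rfl⟩ i
    cases h : b i <;> simp [h]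
  · intro h
    refine ⟨fun i => decide (x i = 1), funext fun i => ?_⟩
    rcases h i with hi | hi <;> norm_num [hi]

lemma mem_pmCubeStar_iff :
    x ∈ pmCubeStar d ↔ x ∈ pmCube d ∧ x ≠ -allOne d ∧ x ≠ allOne d := by
  simp [pmCubeStar]

lemma pmCubeStar_subset_pmCube (d : ℕ) : pmCubeStar d ⊆ pmCube d := sdiff_subset

lemma neg_mem_pmCubeStar (hx : x ∈ pmCubeStar d) : -x ∈ pmCubeStar d := by
  rw [mem_pmCubeStar_iff, mem_pmCube_iff] at hx ⊢
  obtain ⟨hcube, hneg, hone⟩ := hx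
  refine ⟨fun i => ?_, fun h => hone (neg_injective h), fun h => hneg (neg_eq_iff_eq_neg.mp h)⟩
  simpa [neg_eq_iff_eq_neg, or_comm] using hcube i

lemma pmCube_subset_Icc (d : ℕ) :
    (pmCube d : Set (Fin d → ℝ)) ⊆ Set.Icc (-allOne d) (allOne d) := by
  intro x hx
  constructor <;> intro i <;> rcases mem_pmCube_iff.mp hx i with h | h <;> norm_num [h, allOne]

lemma exists_eq_neg_one_of_mem_pmCubeStar (hx : x ∈ pmCubeStar d) : ∃ i, x i = -1 := by
  obtain ⟨hcube, -, hone⟩ := mem_pmCubeStar_iff.mp hx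
  obtain ⟨i, hi⟩ := Function.ne_iff.mp hone
  exact ⟨i, (mem_pmCube_iff.mp hcube i).resolve_left hi⟩

lemma exists_eq_one_of_mem_pmCubeStar (hx : x ∈ pmCubeStar d) : ∃ i, x i = 1 := by
  obtain ⟨i, hi⟩ := exists_eq_neg_one_of_mem_pmCubeStar (neg_mem_pmCubeStar hx)
  exact ⟨i, neg_injective hi⟩

end Cube

section Projection

variable {r : ℕ}

/-- The event of `tau` and `alpha`: `conv Y` does not meet the diagonal `conv{-𝟙, 𝟙}`. -/
def MissesDiagonal {d : ℕ} (Y : Finset (Fin d → ℝ)) : Prop :=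
  convexHull ℝ (Y : Set (Fin d → ℝ)) ∩ segment ℝ (-allOne d) (allOne d) = ∅

/-- `phi r` bundled as a linear map. -/
def phiLinearMap (r : ℕ) : (Fin (r + 1) → ℝ) →ₗ[ℝ] (Fin r → ℝ) where
  toFun := phi r
  map_add' x y := by
    ext i
    simp only [phi, Pi.add_apply, sum_add_distrib]
    ring
  map_smul' c x := by
    ext i
    simp only [phi, Pi.smul_apply, smul_eq_mul, RingHom.id_apply, ← mul_sum]
    ring

lemma phi_neg (x : Fin (r + 1) → ℝ) : phi r (-x) = -phi r x := (phiLinearMap r).map_neg x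

lemma ker_phiLinearMap (r : ℕ) :
    LinearMap.ker (phiLinearMap r) = Submodule.span ℝ {allOne (r + 1)} := by
  ext x
  rw [LinearMap.mem_ker, Submodule.mem_span_singleton]
  constructor
  · intro hx
    set c : ℝ := (∑ j, x j) / (r + 1) with hc
    have init_eq (i : Fin r) : x i.castSucc = c := sub_eq_zero.mp (congrFun hx i)
    have last_eq : x (Fin.last r) = c := by
      have hsum : (r + 1) * c = r * c + x (Fin.last r) := by
        have sum_eq : ∑ j, x j = r * c + x (Fin.last r) := by
          simp [Fin.sum_univ_castSucc, init_eq]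
        rw [← sum_eq, hc]
        field_simp
      linarith
    refine ⟨c, funext fun i => ?_⟩
    simpa [allOne] using (Fin.lastCases last_eq init_eq i : x i = c).symm
  · rintro ⟨c, rfl⟩
    have phi_allOne : phiLinearMap r (allOne (r + 1)) = 0 := by
      ext i
      simp [phiLinearMap, phi, allOne, div_self (Nat.cast_add_one_ne_zero (R := ℝ) r)]
    rw [map_smul, phi_allOne, smul_zero]

lemma injOn_phi_pmCubeStar (r : ℕ) :
    Set.InjOn (phi r) (pmCubeStar (r + 1) : Set (Fin (r + 1) → ℝ)) := by
  intro x hx y hy hxy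
  have hker : x - y ∈ LinearMap.ker (phiLinearMap r) := LinearMap.sub_mem_ker_iff.mpr hxy
  rw [ker_phiLinearMap, Submodule.mem_span_singleton] at hker
  obtain ⟨c, hc⟩ := hker
  have sub_eq (i) : x i - y i = c := by simpa [allOne] using (congrFun hc i).symm
  obtain ⟨hy_ge, hy_le⟩ := pmCube_subset_Icc _ (pmCubeStar_subset_pmCube _ hy)
  have c_nonneg : 0 ≤ c := by
    obtain ⟨i, hi⟩ := exists_eq_one_of_mem_pmCubeStar hx
    have : y i ≤ 1 := hy_le i
    linarith [sub_eq i]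
  have c_nonpos : c ≤ 0 := by
    obtain ⟨i, hi⟩ := exists_eq_neg_one_of_mem_pmCubeStar hx
    have : -1 ≤ y i := hy_ge i
    linarith [sub_eq i]
  funext i
  linarith [sub_eq i]

lemma missesDiagonal_iff_zero_notMem_convexHull {Y : Finset (Fin (r + 1) → ℝ)}
    (hY : (Y : Set (Fin (r + 1) → ℝ)) ⊆ Set.Icc (-allOne (r + 1)) (allOne (r + 1))) :
    MissesDiagonal Y ↔ 0 ∉ convexHull ℝ (Y.image (phi r) : Set (Fin r → ℝ)) := by
  have image_hull : phi r '' convexHull ℝ (Y : Set (Fin (r + 1) → ℝ)) =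
      convexHull ℝ (phi r '' Y) :=
    (phiLinearMap r).image_convexHull Y
  rw [MissesDiagonal, coe_image, ← image_hull, ← not_iff_not, not_not, ← Ne,
    ← Set.nonempty_iff_ne_empty]
  constructor
  · rintro ⟨x, hx, hseg⟩
    have hline : x ∈ Submodule.span ℝ {allOne (r + 1)} :=
      (Submodule.span ℝ {allOne (r + 1)}).convex.segment_subset
        (neg_mem (Submodule.mem_span_singleton_self _)) (Submodule.mem_span_singleton_self _) hseg
    rw [← ker_phiLinearMap] at hline
    exact ⟨x, hx, hline⟩
  · rintro ⟨x, hx, hphi⟩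
    have hker : x ∈ LinearMap.ker (phiLinearMap r) := hphi
    rw [ker_phiLinearMap, Submodule.mem_span_singleton] at hker
    obtain ⟨c, rfl⟩ := hker
    obtain ⟨hge, hle⟩ := convexHull_min hY (convex_Icc _ _) hx
    have hc : c ∈ Set.Icc (-1) 1 := by
      constructor
      · simpa [allOne] using hge 0
      · simpa [allOne] using hle 0
    exact ⟨c • allOne (r + 1), hx, smul_mem_segment_neg_self hc _⟩

end Projection

section HalfConfiguration

open scoped Pointwise

lemma antipodalFree_VrPlus (r : ℕ) : AntipodalFree (VrPlus r) := by
  intro s hs hs'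
  simp only [VrPlus, mem_image, mem_filter] at hs hs'
  obtain ⟨x, ⟨hx, hx_last⟩, rfl⟩ := hs
  obtain ⟨y, ⟨hy, hy_last⟩, hxy⟩ := hs'
  rw [← phi_neg] at hxy
  have hyx : y = -x := injOn_phi_pmCubeStar r hy (neg_mem_pmCubeStar hx) hxy
  norm_num [hyx, hx_last] at hy_last

lemma VrPlus_union_neg_VrPlus (r : ℕ) : VrPlus r ∪ -VrPlus r = Vr r := by
  ext s
  simp only [VrPlus, Vr, mem_union, mem_neg', mem_image, mem_filter]
  constructor
  · rintro (⟨x, ⟨hx, -⟩, rfl⟩ | ⟨x, ⟨hx, -⟩, hxs⟩)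
    · exact ⟨x, hx, rfl⟩
    · exact ⟨-x, neg_mem_pmCubeStar hx, by rw [phi_neg, hxs, neg_neg]⟩
  · rintro ⟨x, hx, rfl⟩
    rcases mem_pmCube_iff.mp (pmCubeStar_subset_pmCube _ hx) (Fin.last r) with h | h
    · exact .inl ⟨x, ⟨hx, h⟩, rfl⟩
    · exact .inr ⟨-x, ⟨neg_mem_pmCubeStar hx, by simp [h]⟩, phi_neg x⟩

lemma sum_antipodalFreeSubsets_pmCubeStar {M : Type*} [AddCommMonoid M] (r m : ℕ)
    (g : Finset (Fin r → ℝ) → M) :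
    ∑ Y ∈ antipodalFreeSubsets (pmCubeStar (r + 1)) m, g (Y.image (phi r)) =
      ∑ Z ∈ (VrPlus r).powersetCard m, ∑ ε : Z → Bool, g (signedImage Z ε) := by
  rw [← sum_antipodalFreeSubsets_union_neg (antipodalFree_VrPlus r), VrPlus_union_neg_VrPlus, Vr,
    sum_antipodalFreeSubsets_image phi_neg (injOn_phi_pmCubeStar r)
      fun _ => neg_mem_pmCubeStar]

lemma signCount_eq_card_filter_signedImage {r : ℕ} (S : Finset (Fin r → ℝ)) :
    signCount S = #{ε : S → Bool | 0 ∉ convexHull ℝ (signedImage S ε : Set (Fin r → ℝ))} := by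
  simp only [signCount, signedImage, coe_image, coe_univ, Set.image_univ, ite_smul, one_smul,
    neg_smul]

lemma card_antipodalFreeSubsets_pmCubeStar (r m : ℕ) :
    #(antipodalFreeSubsets (pmCubeStar (r + 1)) m) = #((VrPlus r).powersetCard m) * 2 ^ m := by
  rw [card_eq_sum_ones, sum_antipodalFreeSubsets_pmCubeStar r m fun _ => 1]
  refine sum_const_nat fun Z hZ => ?_
  simp [(mem_powersetCard.mp hZ).2]

lemma card_filter_missesDiagonal (r m : ℕ) :
    #{Y ∈ antipodalFreeSubsets (pmCubeStar (r + 1)) m | MissesDiagonal Y} =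
      ∑ Z ∈ (VrPlus r).powersetCard m, signCount Z := by
  have missesDiagonal_iff (Y : Finset (Fin (r + 1) → ℝ))
      (hY : Y ∈ antipodalFreeSubsets (pmCubeStar (r + 1)) m) :
      MissesDiagonal Y ↔ 0 ∉ convexHull ℝ (Y.image (phi r) : Set (Fin r → ℝ)) := by
    have hYcube : Y ⊆ pmCube (r + 1) :=
      (mem_antipodalFreeSubsets.mp hY).1.1.trans (pmCubeStar_subset_pmCube _)
    exact missesDiagonal_iff_zero_notMem_convexHull
      ((coe_subset.mpr hYcube).trans (pmCube_subset_Icc _))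
  rw [filter_congr missesDiagonal_iff, card_filter,
    sum_antipodalFreeSubsets_pmCubeStar r m fun W =>
      if 0 ∉ convexHull ℝ (W : Set (Fin r → ℝ)) then 1 else 0]
  simp only [signCount_eq_card_filter_signedImage, card_filter]

lemma alpha_eq_card_div_card (k m : ℕ) :
    alpha k m =
      (#{Y ∈ antipodalFreeSubsets (pmCubeStar k) m | MissesDiagonal Y} : ℝ) /
        #(antipodalFreeSubsets (pmCubeStar k) m) := by
  rw [antipodalFreeSubsets, filter_comm, filter_filter]
  rfl

lemma alphaSet_eq_signCount_div {r : ℕ} (S : Finset (Fin r → ℝ)) :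
    alphaSet S = signCount S / 2 ^ #S := by
  simp [alphaSet]

end HalfConfiguration

-- STATEMENT 9
theorem statement9 (r m : ℕ) :
    alpha (r + 1) m =
      (∑ Z ∈ (VrPlus r).powersetCard m, alphaSet Z) /
        (((VrPlus r).powersetCard m).card : ℝ) := by
  have sum_alphaSet : ∑ Z ∈ (VrPlus r).powersetCard m, alphaSet Z =
      (∑ Z ∈ (VrPlus r).powersetCard m, (signCount Z : ℝ)) / 2 ^ m := by
    rw [sum_div]
    refine sum_congr rfl fun Z hZ => ?_
    rw [alphaSet_eq_signCount_div, (mem_powersetCard.mp hZ).2]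
  rw [alpha_eq_card_div_card, card_filter_missesDiagonal,
    card_antipodalFreeSubsets_pmCubeStar, sum_alphaSet]
  push_cast
  rw [div_div, mul_comm]

end
end

section
/- For every finite subset S ⊂ ℝ^r \ {0}: the number of sign vectors ε ∈ {−1,+1}^S with 0 ∉ conv{ε_s · s : s ∈ S} equals χ(S), the number of chambers of the hyperplane arrangement ℋ(S). -/
open Finset Filter MeasureTheory

open scoped Classical

noncomputable section

/-!
A point off the hyperplanes records, for each of them, the side on which it lies. This sign vector
is locally constant, and the points with a given sign vector `ε` form an open convex cone, so the
chambers correspond to the sign vectors that are realized. By Gordan's theorem the cone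
`{x | ∀ s, ε_s sᵀx > 0}` is nonempty exactly when `0 ∉ conv {ε_s s}`.

Gordan's theorem is obtained by separating the range of `x ↦ (a i x)ᵢ` from the open positive
orthant of `ℝ^ι`: a separating functional vanishes on the range, and its coefficients, negated and
normalized to sum `1`, are the weights of a convex combination of the `a i` equal to `0`.
-/

section LinearFunctionals

variable {ι E M N : Type*} [AddCommGroup E] [Module ℝ E] [AddCommGroup M] [Module ℝ M]
  [AddCommGroup N] [Module ℝ N]

/-- The open polyhedral cone of common solutions of the strict inequalities `a i x > 0`. -/
def openCone (a : ι → Module.Dual ℝ E) : Set E := {x | ∀ i, 0 < a i x}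

/-- The points lying on none of the hyperplanes `a i x = 0`. A zero functional is allowed, and
makes this set empty. -/
def hyperplaneComplement (a : ι → Module.Dual ℝ E) : Set E := {x | ∀ i, a i x ≠ 0}

/-- The family `ε i • v i` for a sign vector `ε`, where `true` encodes `+1` and `false`
encodes `-1`. -/
def signFlip (ε : ι → Bool) (v : ι → M) : ι → M := fun i => (if ε i then (1 : ℝ) else -1) • v i

/-- The sign vector of a point `x` with respect to the hyperplanes `a i x = 0`. It is meaningful
only on `hyperplaneComplement a`, as the sign `0` is recorded as `false`. -/
def signVector (a : ι → Module.Dual ℝ E) (x : E) : ι → Bool := fun i => decide (0 < a i x)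

lemma convex_openCone (a : ι → Module.Dual ℝ E) : Convex ℝ (openCone a) := by
  simp only [openCone, Set.ofPred_forall]
  exact convex_iInter fun i => convex_halfSpace_gt (a i).isLinear 0

lemma dual_eq_zero_of_forall_le_apply {f : Module.Dual ℝ E} {u : ℝ} (h : ∀ x, u ≤ f x) :
    f = 0 := by
  ext x
  by_contra hx
  have := h (((u - 1) / f x) • x)
  rw [map_smul, smul_eq_mul, div_mul_cancel₀ _ hx] at this
  linarith

lemma exists_neg_on_orthant_of_openCone_eq_empty [Finite ι] {a : ι → Module.Dual ℝ E}
    (ha : openCone a = ∅) :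
    ∃ f : StrongDual ℝ (ι → ℝ), (∀ y, (∀ i, 0 < y i) → f y < 0) ∧ ∀ x, f (fun i => a i x) = 0 := by
  have hdisj : Disjoint (Set.univ.pi fun _ : ι => Set.Ioi (0 : ℝ))
      (LinearMap.range (LinearMap.pi a) : Set (ι → ℝ)) := by
    rw [Set.disjoint_left]
    rintro _ hy ⟨x, rfl⟩
    exact ha.subset fun i => hy i trivial
  obtain ⟨f, u, hneg, hge⟩ := geometric_hahn_banach_open
    (convex_pi fun _ _ => convex_Ioi _) (isOpen_set_pi Set.finite_univ fun _ _ => isOpen_Ioi)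
    (LinearMap.range (LinearMap.pi a)).convex hdisj
  have hge' : ∀ x, u ≤ f (LinearMap.pi a x) := fun x => hge _ ⟨x, rfl⟩
  have hu : u ≤ 0 := by simpa using hge' 0
  have hzero : (f : Module.Dual ℝ (ι → ℝ)) ∘ₗ LinearMap.pi a = 0 :=
    dual_eq_zero_of_forall_le_apply hge'
  exact ⟨f, fun y hy => (hneg y fun i _ => hy i).trans_le hu, LinearMap.congr_fun hzero⟩

lemma apply_nonpos_of_neg_on_orthant {f : StrongDual ℝ (ι → ℝ)}
    (hf : ∀ y, (∀ i, 0 < y i) → f y < 0) {y : ι → ℝ} (hy : 0 ≤ y) : f y ≤ 0 := by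
  have hclosure : y ∈ closure (Set.univ.pi fun _ : ι => Set.Ioi (0 : ℝ)) := by
    simp only [closure_pi_set, closure_Ioi]
    exact fun i _ => hy i
  refine closure_minimal (fun z hz => ?_) (isClosed_le f.continuous continuous_const) hclosure
  exact (hf z fun i => hz i trivial).le

/-- **Gordan's theorem** of the alternative. -/
theorem openCone_nonempty_iff [Finite ι] (a : ι → Module.Dual ℝ E) :
    (openCone a).Nonempty ↔ 0 ∉ convexHull ℝ (Set.range a) := by
  constructor
  · rintro ⟨x, hx⟩ h0
    have hconv : Convex ℝ {b : Module.Dual ℝ E | 0 < b x} :=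
      convex_halfSpace_gt (Module.Dual.eval ℝ E x).isLinear 0
    have hsub : convexHull ℝ (Set.range a) ⊆ {b | 0 < b x} :=
      convexHull_min (Set.range_subset_iff.2 hx) hconv
    simpa using hsub h0
  · contrapose!
    intro ha
    have := Fintype.ofFinite ι
    obtain ⟨f, hneg, hzero⟩ := exists_neg_on_orthant_of_openCone_eq_empty ha
    have hf (y : ι → ℝ) : f y = ∑ i, f (Pi.single i 1) * y i := by
      conv_lhs => rw [pi_eq_sum_univ' y]
      simp only [map_sum, map_smul, smul_eq_mul, mul_comm]
    have hweights (i : ι) : f (Pi.single i 1) ≤ 0 :=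
      apply_nonpos_of_neg_on_orthant hneg (Pi.single_nonneg.2 zero_le_one)
    have htotal : ∑ i, f (Pi.single i 1) < 0 := by
      simpa [hf fun _ => 1] using hneg (fun _ => 1) fun _ => one_pos
    have hrelation : ∑ i, f (Pi.single i 1) • a i = 0 := by
      ext x
      simpa [hf fun i => a i x] using hzero x
    simpa [Finset.centerMass, hrelation] using Finset.univ.centerMass_mem_convexHull_of_nonpos
      (fun i _ => hweights i) htotal fun i _ => Set.mem_range_self (f := a) i

lemma mem_openCone_signFlip_iff {a : ι → Module.Dual ℝ E} {ε : ι → Bool} {x : E} :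
    x ∈ openCone (signFlip ε a) ↔ x ∈ hyperplaneComplement a ∧ signVector a x = ε := by
  have pos_iff (b : Bool) (t : ℝ) :
      0 < (if b then (1 : ℝ) else -1) * t ↔ t ≠ 0 ∧ decide (0 < t) = b := by
    cases b <;> grind
  simp only [openCone, hyperplaneComplement, signFlip, signVector, Set.mem_ofPred_eq,
    LinearMap.smul_apply, smul_eq_mul, pos_iff, forall_and, funext_iff]

lemma image_signVector_hyperplaneComplement [Finite ι] (a : ι → Module.Dual ℝ E) :
    signVector a '' hyperplaneComplement a =
      {ε | 0 ∉ convexHull ℝ (Set.range (signFlip ε a))} := by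
  ext ε
  simp only [Set.mem_ofPred_eq, ← openCone_nonempty_iff, Set.Nonempty, mem_openCone_signFlip_iff,
    Set.mem_image]

lemma zero_mem_convexHull_range_signFlip_comp {f : M →ₗ[ℝ] N} (hf : Function.Injective f)
    (ε : ι → Bool) (v : ι → M) :
    0 ∈ convexHull ℝ (Set.range (signFlip ε (f ∘ v))) ↔
      0 ∈ convexHull ℝ (Set.range (signFlip ε v)) := by
  have hcomp : signFlip ε (f ∘ v) = f ∘ signFlip ε v := by
    funext i
    simp only [signFlip, Function.comp_apply, map_smul]
  rw [hcomp, Set.range_comp, ← f.image_convexHull]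
  simpa only [map_zero] using hf.mem_set_image (a := 0)

end LinearFunctionals

section Chambers

theorem natCard_connectedComponents_of_isPreconnected_fibers {X Y : Type*} [TopologicalSpace X]
    [TopologicalSpace Y] [TotallyDisconnectedSpace Y] {f : X → Y} (hf : Continuous f)
    (hfiber : ∀ y, IsPreconnected (f ⁻¹' {y})) :
    Nat.card (ConnectedComponents X) = (Set.range f).ncard := by
  have hinj : Function.Injective hf.connectedComponentsLift := by
    refine ConnectedComponents.surjective_coe.forall₂.2 fun x y hxy => ?_
    simp only [hf.connectedComponentsLift_apply_coe] at hxy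
    rw [ConnectedComponents.coe_eq_coe']
    exact (hfiber (f y)).subset_connectedComponent rfl hxy
  rw [← Nat.card_range_of_injective hinj, ← ConnectedComponents.surjective_coe.range_comp,
    hf.connectedComponentsLift_comp_coe, Nat.card_coe_set_eq]

lemma isClopen_setOf_pos {X : Type*} [TopologicalSpace X] {f : X → ℝ} (hf : Continuous f)
    (hne : ∀ x, f x ≠ 0) : IsClopen {x | 0 < f x} := by
  have hnonneg : {x | 0 < f x} = {x | 0 ≤ f x} := by
    simp only [(hne _).symm.le_iff_lt]
  exact ⟨hnonneg ▸ isClosed_le continuous_const hf, isOpen_lt continuous_const hf⟩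

variable {ι E : Type*} [AddCommGroup E] [Module ℝ E] [TopologicalSpace E]
  {a : ι → Module.Dual ℝ E}

lemma continuous_signVector_restrict (ha : ∀ i, Continuous (a i)) :
    Continuous ((hyperplaneComplement a).domRestrict (signVector a)) := by
  refine continuous_pi fun i => (continuous_bool_rng true).2 ?_
  convert isClopen_setOf_pos ((ha i).comp continuous_subtype_val)
    fun x : hyperplaneComplement a => x.2 i
  simp [Set.preimage, signVector]

lemma isPreconnected_fiber_signVector [IsTopologicalAddGroup E] [ContinuousSMul ℝ E]
    (a : ι → Module.Dual ℝ E) (ε : ι → Bool) :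
    IsPreconnected ((hyperplaneComplement a).domRestrict (signVector a) ⁻¹' {ε}) := by
  have himage : Subtype.val '' ((hyperplaneComplement a).domRestrict (signVector a) ⁻¹' {ε}) =
      openCone (signFlip ε a) := by
    ext x
    simp [mem_openCone_signFlip_iff, and_comm]
  rw [← Topology.IsInducing.subtypeVal.isPreconnected_image, himage]
  exact (convex_openCone _).isPreconnected

theorem statement10_general [Finite ι] [IsTopologicalAddGroup E] [ContinuousSMul ℝ E]
    (ha : ∀ i, Continuous (a i)) :
    {ε : ι → Bool | 0 ∉ convexHull ℝ (Set.range (signFlip ε a))}.ncard =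
      Nat.card (ConnectedComponents (hyperplaneComplement a)) := by
  rw [natCard_connectedComponents_of_isPreconnected_fibers (continuous_signVector_restrict ha)
    (isPreconnected_fiber_signVector a), Set.range_domRestrict,
    image_signVector_hyperplaneComplement]

end Chambers

section DotProduct

variable {r : ℕ} (S : Finset (Fin r → ℝ))

/-- The functionals `x ↦ sᵀx`, for `s ∈ S`, that define the hyperplanes of `ℋ(S)`. -/
def dotFunctional : S → Module.Dual ℝ (Fin r → ℝ) := fun s => dotProductEquiv ℝ (Fin r) s

lemma continuous_dotFunctional (s : S) : Continuous (dotFunctional S s) :=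
  (dotFunctional S s).continuous_of_finiteDimensional

lemma arrComplement_eq_hyperplaneComplement :
    arrComplement S = hyperplaneComplement (dotFunctional S) := by
  ext x
  exact (Subtype.forall (q := fun s : S => dotFunctional S s x ≠ 0)).symm

lemma signCount_eq_ncard :
    signCount S = {ε | 0 ∉ convexHull ℝ (Set.range (signFlip ε (dotFunctional S)))}.ncard := by
  have hhull (ε : S → Bool) := zero_mem_convexHull_range_signFlip_comp (ι := S)
    (f := (dotProductEquiv ℝ (Fin r)).toLinearMap) (dotProductEquiv ℝ (Fin r)).injective ε (↑)
  rw [signCount, ← Set.ncard_coe_finset, Finset.coe_filter_univ]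
  exact congrArg Set.ncard (Set.ext fun ε => (hhull ε).not.symm)

end DotProduct

-- STATEMENT 10
theorem statement10 {r : ℕ} (S : Finset (Fin r → ℝ)) (hS : (0 : Fin r → ℝ) ∉ S) :
    signCount S = chi S := by
  rw [signCount_eq_ncard, chi, arrComplement_eq_hyperplaneComplement]
  exact statement10_general (continuous_dotFunctional S)

end
end

section
/- Let m : ℕ → ℕ satisfy m(k) ∈ o(2^{k/2}). Then lim_{k→∞} ( τ(k, m(k)) − b(k−2, m(k)−1) / 2^{m(k)−1} ) = 0, where b(p,q) := Σ_{i=0}^{p} C(q,i). -/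
open Finset Filter MeasureTheory

open scoped Classical

noncomputable section

/-!
A uniformly random `m`-subset of `C^k_*` behaves, up to an error `O(m² / 2^k)`, like `m` independent
uniform points of the cube. The convex hull of such points misses the segment `conv {-𝟙, 𝟙}` iff
their images modulo `𝟙` lie in an open half-space of the `(k - 1)`-dimensional quotient. Since a
uniform point and its antipode have the same law, the probability of this is the expected number of
sign patterns of the images under linear functionals, divided by `2^m`.

Sign patterns shatter only linearly independent sets, of size less than `k`, so by Pajor's form of
the Sauer–Shelah lemma their number is at most `∑ i < k, C(m, i)`. Conversely, the number of sign
patterns is at least the number of strongly shattered sets, and a set is strongly shattered as soon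
as its vectors are in general position. By Odlyzko's bound for random points of the cube in a
subspace, a given set of size less than `k - t` is in general position with probability at least
`1 - m / 2^t`. All individual binomial probabilities are at most `1 / √(m + 1)`, so the two bounds
agree in the limit for a suitable `t`.
-/

section SetFamilies

lemma card_filter_card_lt {α : Type*} [Fintype α] (n : ℕ) :
    #{X : Finset α | #X < n} = ∑ i ∈ range n, (Fintype.card α).choose i := by
  have hmaps : ∀ X ∈ ({X : Finset α | #X < n} : Finset _), #X ∈ range n := by simp
  rw [card_eq_sum_card_fiberwise hmaps]
  refine sum_congr rfl fun i hi => ?_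
  rw [← card_univ, ← card_powersetCard]
  congr 1
  ext X
  have := mem_range.1 hi
  simp only [mem_filter, mem_univ, true_and, mem_powersetCard, subset_univ]
  omega

variable {α : Type*} [DecidableEq α]

/-- `𝒜` strongly shatters `X` if every subset of `X` is the trace on `X` of a member of `𝒜`, and
these members can be chosen to agree outside `X`, namely with a fixed set `B`. -/
def StronglyShatters (𝒜 : Finset (Finset α)) (X : Finset α) : Prop :=
  ∃ B, ∀ t ⊆ X, t ∪ B \ X ∈ 𝒜

-- If `Xᶜ` were shattered by `𝒜ᶜ`, some member of `𝒜ᶜ` would agree with `B` on `Xᶜ`.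
lemma StronglyShatters.not_shatters_compl [Fintype α] {𝒜 : Finset (Finset α)} {X : Finset α}
    (h : StronglyShatters 𝒜 X) : ¬ 𝒜ᶜ.Shatters Xᶜ := by
  obtain ⟨B, hB⟩ := h
  intro hshatters
  obtain ⟨u, hu, huB⟩ := hshatters (t := B \ X) fun i hi => by
    simpa using (Finset.mem_sdiff.1 hi).2
  have hsplit : u ∩ X ∪ B \ X = u := by
    ext i
    have := Finset.ext_iff.1 huB i
    simp only [mem_inter, mem_compl, Finset.mem_sdiff] at this
    simp only [mem_union, mem_inter, Finset.mem_sdiff]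
    tauto
  exact mem_compl.1 hu (hsplit ▸ hB (u ∩ X) inter_subset_right)

-- Pajor's inequality for `𝒜ᶜ`, read through complements.
lemma card_le_card_of_stronglyShatters [Finite α] {𝒜 𝒢 : Finset (Finset α)}
    (h : ∀ X ∈ 𝒢, StronglyShatters 𝒜 X) : #𝒢 ≤ #𝒜 := by
  have := Fintype.ofFinite α
  have hsub : 𝒢.image compl ⊆ (𝒜ᶜ).shattererᶜ := by
    intro Y hY
    obtain ⟨X, hX, rfl⟩ := mem_image.1 hY
    rw [mem_compl, mem_shatterer]
    exact (h X hX).not_shatters_compl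
  have hcard := card_le_card hsub
  rw [card_image_of_injective _ compl_injective, card_compl] at hcard
  have hpajor := card_le_card_shatterer 𝒜ᶜ
  rw [card_compl] at hpajor
  have h𝒜 := card_le_univ 𝒜
  have hshatterer := card_le_univ (𝒜ᶜ).shatterer
  omega

end SetFamilies

section HalfSpaces

lemma exists_forall_sign_mul_add_eq {K ι : Type*} [Field K] [LinearOrder K]
    [IsStrictOrderedRing K] [Finite ι] (a b : ι → K) :
    ∃ c : K, ∀ i, a i ≠ 0 → SignType.sign (c * a i + b i) = SignType.sign (a i) := by
  obtain ⟨c, hc⟩ := (Set.finite_range fun i => |b i| / |a i|).bddAbove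
  refine ⟨c + 1, fun i hi => ?_⟩
  have hdom : |b i| < (c + 1) * |a i| :=
    (div_lt_iff₀ (abs_pos.2 hi)).1 ((hc ⟨i, rfl⟩).trans_lt (lt_add_one c))
  rcases lt_or_gt_of_ne hi with hneg | hpos
  · rw [abs_of_neg hneg] at hdom
    rw [sign_neg hneg, sign_eq_neg_one_iff]
    linarith [le_abs_self (b i)]
  · rw [abs_of_pos hpos] at hdom
    rw [sign_pos hpos, sign_eq_one_iff]
    linarith [neg_abs_le (b i)]

variable (K : Type*) {V ι : Type*} [Field K] [AddCommGroup V] [Module K V]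

variable {K} in
lemma exists_dual_forall_apply_eq {v : ι → V} {s : Set ι} (hv : LinearIndepOn K v s) (c : ι → K) :
    ∃ g : Module.Dual K V, ∀ i ∈ s, g (v i) = c i := by
  obtain ⟨g, hg⟩ := LinearMap.exists_extend
    (Finsupp.linearCombination K (fun i : s => c i) ∘ₗ LinearIndependent.repr hv)
  refine ⟨g, fun i hi => ?_⟩
  have hrepr := LinearMap.congr_fun hg ⟨v i, Submodule.subset_span ⟨⟨i, hi⟩, rfl⟩⟩
  rw [LinearMap.comp_apply, LinearMap.comp_apply,
    LinearIndependent.repr_eq_single hv ⟨i, hi⟩ ⟨v i, _⟩ rfl] at hrepr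
  simpa using hrepr

/-- The vectors of `v` indexed by `X` are linearly independent, and none of the other vectors of `v`
lies in their span. -/
def IsGenericAt (v : ι → V) (X : Set ι) : Prop :=
  ∀ i, v i ∉ Submodule.span K (v '' (X \ {i}))

lemma IsGenericAt.linearIndepOn {v : ι → V} {X : Set ι} (h : IsGenericAt K v X) :
    LinearIndepOn K v X :=
  linearIndepOn_iff_notMem_span.2 fun i _ => h i

lemma IsGenericAt.exists_dual_vanishing [Finite ι] [Infinite K] {v : ι → V} {X : Set ι}
    (h : IsGenericAt K v X) :
    ∃ g : Module.Dual K V, (∀ i ∈ X, g (v i) = 0) ∧ ∀ i ∉ X, g (v i) ≠ 0 := by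
  let W := Submodule.span K (v '' X)
  obtain ⟨g, hg⟩ := Module.exists_dual_forall_apply_ne_zero (K := K)
    (fun i : ↥Xᶜ => W.mkQ (v i)) fun ⟨i, hi⟩ hzero => h i <| by
      rw [Set.sdiff_singleton_eq_self hi]
      exact (Submodule.Quotient.mk_eq_zero W).1 hzero
  refine ⟨g ∘ₗ W.mkQ, fun i hi => ?_, fun i hi => hg ⟨i, hi⟩⟩
  have hzero : W.mkQ (v i) = 0 :=
    (Submodule.Quotient.mk_eq_zero W).2 (Submodule.subset_span ⟨i, hi, rfl⟩)
  rw [LinearMap.comp_apply, hzero, map_zero]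

variable [LinearOrder K]

/-- The vectors `v i` all lie in one open half-space bounded by a hyperplane through the origin. -/
def InOpenHalfSpace (v : ι → V) : Prop :=
  ∃ g : Module.Dual K V, ∀ i, 0 < g (v i)

variable [Fintype ι] [DecidableEq ι]

/-- The sign patterns realised on `v` by linear functionals vanishing at no `v i`: a pattern is
encoded by the set of indices at which the functional is positive. -/
def signPatterns (v : ι → V) : Finset (Finset ι) :=
  {A | InOpenHalfSpace K (A.piecewise v (-v))}

variable {K}

lemma mem_signPatterns {v : ι → V} {A : Finset ι} :
    A ∈ signPatterns K v ↔ InOpenHalfSpace K (A.piecewise v (-v)) := by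
  simp [signPatterns]

variable [IsStrictOrderedRing K]

lemma mem_signPatterns_iff_exists_dual {v : ι → V} {A : Finset ι} :
    A ∈ signPatterns K v ↔
      ∃ g : Module.Dual K V, (∀ i ∈ A, 0 < g (v i)) ∧ ∀ i ∉ A, g (v i) < 0 := by
  rw [mem_signPatterns]
  refine exists_congr fun g => ⟨fun h => ⟨fun i hi => ?_, fun i hi => ?_⟩, fun h i => ?_⟩
  · simpa [hi] using h i
  · simpa [hi] using h i
  · by_cases hi : i ∈ A <;> simp [hi, h.1, h.2]

-- The signs of the coefficients of a linear relation are not the signs of any functional.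
lemma linearIndepOn_of_shatters_signPatterns {v : ι → V} {X : Finset ι}
    (hX : (signPatterns K v).Shatters X) : LinearIndepOn K v (X : Set ι) := by
  rw [linearIndepOn_finset_iff]
  intro c hc
  obtain ⟨A, hA, hXA⟩ := hX (t := {i ∈ X | 0 < c i}) (filter_subset _ _)
  obtain ⟨g, hpos, hneg⟩ := mem_signPatterns_iff_exists_dual.1 hA
  have hmem : ∀ i ∈ X, i ∈ A ↔ 0 < c i := fun i hi => by
    simpa [hi] using Finset.ext_iff.1 hXA i
  have hnonneg : ∀ i ∈ X, 0 ≤ c i * g (v i) := fun i hi => by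
    by_cases hci : 0 < c i
    · exact mul_nonneg hci.le (hpos i ((hmem i hi).2 hci)).le
    · exact mul_nonneg_of_nonpos_of_nonpos (not_lt.1 hci) (hneg i (mt (hmem i hi).1 hci)).le
  have hsum : ∑ i ∈ X, c i * g (v i) = 0 := by
    simpa [map_sum] using congrArg g hc
  intro i hi
  have hgi : g (v i) ≠ 0 := by
    by_cases hiA : i ∈ A
    exacts [(hpos i hiA).ne', (hneg i hiA).ne]
  exact (mul_eq_zero.1 ((sum_eq_zero_iff_of_nonneg hnonneg).1 hsum i hi)).resolve_right hgi

lemma card_signPatterns_le [FiniteDimensional K V] (v : ι → V) :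
    #(signPatterns K v) ≤ ∑ i ∈ range (Module.finrank K V + 1), (Fintype.card ι).choose i := by
  rw [← card_filter_card_lt]
  refine (card_le_card_shatterer _).trans (card_le_card fun X hX => ?_)
  have hindep := linearIndepOn_of_shatters_signPatterns (mem_shatterer.1 hX)
  have hcard := LinearIndependent.fintype_card_le_finrank hindep
  rw [mem_filter]
  exact ⟨mem_univ _, by simpa [Nat.lt_succ_iff] using hcard⟩

-- A small perturbation of a functional vanishing exactly on `X` keeps the signs off `X`, and can be
-- given any signs on `X`.
lemma IsGenericAt.stronglyShatters {v : ι → V} {X : Finset ι} (h : IsGenericAt K v X) :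
    StronglyShatters (signPatterns K v) X := by
  obtain ⟨g, hgX, hg⟩ := h.exists_dual_vanishing
  refine ⟨({i | 0 < g (v i)} : Finset ι), fun t ht => ?_⟩
  obtain ⟨z, hz⟩ := exists_dual_forall_apply_eq h.linearIndepOn fun i => if i ∈ t then 1 else -1
  obtain ⟨c, hc⟩ := exists_forall_sign_mul_add_eq (g ∘ v) (z ∘ v)
  have hon : ∀ i ∈ X, (c • g + z) (v i) = if i ∈ t then 1 else -1 := fun i hi => by
    simp [hgX i hi, hz i hi]
  have hoff : ∀ i ∉ X, SignType.sign ((c • g + z) (v i)) = SignType.sign (g (v i)) :=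
    fun i hi => hc i (hg i hi)
  refine mem_signPatterns_iff_exists_dual.2 ⟨c • g + z, fun i hi => ?_, fun i hi => ?_⟩ <;>
    simp only [mem_union, Finset.mem_sdiff, mem_filter, mem_univ, true_and] at hi <;>
    by_cases hiX : i ∈ X
  · have hit : i ∈ t := by tauto
    simp [hon i hiX, hit]
  · have hpos : 0 < g (v i) := (hi.resolve_left fun hit => hiX (ht hit)).1
    rw [← sign_eq_one_iff, hoff i hiX, sign_pos hpos]
  · have hit : i ∉ t := by tauto
    simp [hon i hiX, hit]
  · have hneg : g (v i) < 0 := (not_lt.1 fun hpos => hi (Or.inr ⟨hpos, hiX⟩)).lt_of_ne (hg i hiX)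
    rw [← sign_eq_neg_one_iff, hoff i hiX, sign_neg hneg]

lemma card_filter_isGenericAt_le (v : ι → V) :
    #{X : Finset ι | IsGenericAt K v X} ≤ #(signPatterns K v) :=
  card_le_card_of_stronglyShatters fun _ hX => (mem_filter.1 hX).2.stronglyShatters

end HalfSpaces

section Odlyzko

variable {K κ β : Type*} [Field K]

lemma exists_finset_separating_coords [Finite κ] (W : Submodule K (κ → K)) :
    ∃ J : Finset κ, #J ≤ Module.finrank K W ∧ ∀ x ∈ W, (∀ j ∈ J, x j = 0) → x = 0 := by
  let coord : κ → Module.Dual K W := fun j => LinearMap.proj j ∘ₗ W.subtype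
  obtain ⟨κ', a, ha, hspan, hindep⟩ := exists_linearIndependent' K coord
  have := Finite.of_injective a ha
  have := Fintype.ofFinite κ'
  refine ⟨univ.map ⟨a, ha⟩, ?_, fun x hx hzero => ?_⟩
  · rw [card_map, card_univ, ← Subspace.dual_finrank_eq]
    exact hindep.fintype_card_le_finrank
  · have hker : Submodule.span K (Set.range (coord ∘ a)) ≤
        LinearMap.ker (Module.Dual.eval K W ⟨x, hx⟩) := by
      rw [Submodule.span_le]
      rintro _ ⟨i, rfl⟩
      exact hzero (a i) (mem_map_of_mem ⟨a, ha⟩ (mem_univ i))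
    rw [hspan] at hker
    exact funext fun j => hker (Submodule.subset_span ⟨j, rfl⟩)

-- Odlyzko's bound: `finrank K W` suitable coordinates of a point of `W` determine it.
lemma card_filter_comp_mem_le [Fintype κ] [DecidableEq κ] [Fintype β] [Nonempty β]
    {f : β → K} (hf : f.Injective) (W : Submodule K (κ → K)) :
    #{w : κ → β | f ∘ w ∈ W} ≤ Fintype.card β ^ Module.finrank K W := by
  obtain ⟨J, hJ, hsep⟩ := exists_finset_separating_coords W
  calc #{w : κ → β | f ∘ w ∈ W}
      ≤ Fintype.card (J → β) := by
        refine card_le_card_of_injOn (fun w j => w j) (fun _ _ => mem_univ _) ?_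
        intro w hw w' hw' hres
        rw [mem_coe, mem_filter] at hw hw'
        refine hf.comp_left (sub_eq_zero.1 (hsep _ (W.sub_mem hw.2 hw'.2) fun j hj => ?_))
        exact sub_eq_zero.2 (congrArg f (congrFun hres ⟨j, hj⟩))
    _ = Fintype.card β ^ #J := by simp
    _ ≤ Fintype.card β ^ Module.finrank K W := Nat.pow_le_pow_right Fintype.card_pos hJ

end Odlyzko

section Conditioning

variable {α ι : Type*} [Fintype α] [Fintype ι] [DecidableEq ι]

-- `(y, a) ↦ (Function.update y i a, y i)` is an involution of `(ι → α) × α`.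
lemma card_filter_mul_card_eq_sum_update (Q : (ι → α) → Prop) [DecidablePred Q] (i : ι) :
    #{y | Q y} * Fintype.card α = ∑ y : ι → α, #{a | Q (Function.update y i a)} := by
  have hinv : Function.Involutive
      fun p : (ι → α) × α => (Function.update p.1 i p.2, p.1 i) := fun p => by simp
  calc #{y | Q y} * Fintype.card α
      = ∑ y : ι → α, ∑ _a : α, if Q y then 1 else 0 := by
        simp only [sum_const, smul_eq_mul, ← mul_sum, ← card_filter, card_univ, mul_comm]
    _ = ∑ p : (ι → α) × α, if Q p.1 then 1 else 0 := (Fintype.sum_prod_type' _).symm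
    _ = ∑ p : (ι → α) × α, if Q (Function.update p.1 i p.2) then 1 else 0 :=
        (hinv.bijective.sum_comp fun p => if Q p.1 then 1 else 0).symm
    _ = ∑ y : ι → α, #{a | Q (Function.update y i a)} := by
        simp only [Fintype.sum_prod_type, card_filter]

lemma dens_filter_le_of_forall_update {Q : (ι → α) → Prop} [DecidablePred Q] {δ : ℚ≥0}
    (i : ι) (h : ∀ y, dens {a | Q (Function.update y i a)} ≤ δ) : dens {y | Q y} ≤ δ := by
  rcases isEmpty_or_nonempty α with hα | hα
  · have : IsEmpty (ι → α) := ⟨fun y => isEmptyElim (y i)⟩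
    simp [dens_eq_card_div_card]
  have hα : (0 : ℚ≥0) < Fintype.card α := by exact_mod_cast Fintype.card_pos
  rw [dens_eq_card_div_card, div_le_iff₀ (by exact_mod_cast Fintype.card_pos),
    ← mul_le_mul_iff_left₀ hα, mul_assoc]
  calc (#{y | Q y} : ℚ≥0) * Fintype.card α
      = ∑ y : ι → α, (#{a | Q (Function.update y i a)} : ℚ≥0) :=
        mod_cast card_filter_mul_card_eq_sum_update Q i
    _ ≤ ∑ _y : ι → α, δ * Fintype.card α :=
        sum_le_sum fun y _ => (div_le_iff₀ hα).1 (h y)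
    _ = δ * (Fintype.card (ι → α) * Fintype.card α) := by
        rw [sum_const, card_univ, nsmul_eq_mul]; ring

end Conditioning

section FairBinomial

/-- The probability that a binomial variable with `m` trials of success probability `1/2` is less
than `n`. -/
def fairBinomialLT (n m : ℕ) : ℝ :=
  (∑ i ∈ range n, (m.choose i : ℝ)) / 2 ^ m

lemma fairBinomialLT_le_one (n m : ℕ) : fairBinomialLT n m ≤ 1 := by
  rw [fairBinomialLT, div_le_one₀ (by positivity)]
  have hcard := card_filter_card_lt (α := Fin m) n
  rw [Fintype.card_fin] at hcard
  have hle := card_le_univ ({X : Finset (Fin m) | #X < n} : Finset _)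
  rw [hcard, Fintype.card_finset, Fintype.card_fin] at hle
  exact_mod_cast hle

lemma monotone_fairBinomialLT (m : ℕ) : Monotone fun n => fairBinomialLT n m := fun _ _ hn =>
  div_le_div_of_nonneg_right
    (sum_le_sum_of_subset_of_nonneg (range_subset_range.2 hn) fun _ _ _ => Nat.cast_nonneg _)
    (by positivity)

lemma fairBinomialLT_eq_one {n m : ℕ} (h : m < n) : fairBinomialLT n m = 1 := by
  refine (fairBinomialLT_le_one n m).antisymm ?_
  calc (1 : ℝ) = fairBinomialLT (m + 1) m := by
        rw [fairBinomialLT, ← Nat.cast_sum, Nat.sum_range_choose, Nat.cast_pow, Nat.cast_ofNat,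
          div_self (by positivity)]
    _ ≤ fairBinomialLT n m := monotone_fairBinomialLT m h

lemma fairBinomialLT_succ_succ (n m : ℕ) :
    fairBinomialLT (n + 1) (m + 1) = (fairBinomialLT n m + fairBinomialLT (n + 1) m) / 2 := by
  have hpascal : ∑ i ∈ range (n + 1), ((m + 1).choose i : ℝ) =
      ∑ i ∈ range n, (m.choose i : ℝ) + ∑ i ∈ range (n + 1), (m.choose i : ℝ) := by
    rw [sum_range_succ', sum_range_succ' (fun i => (m.choose i : ℝ)), ← add_assoc,
      ← sum_add_distrib]
    simp only [Nat.choose_succ_succ, Nat.succ_eq_add_one, Nat.cast_add, Nat.choose_zero_right]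
  rw [fairBinomialLT, hpascal, fairBinomialLT, fairBinomialLT, pow_succ]
  ring

lemma fairBinomialLT_succ_le_fairBinomialLT_pred (n m : ℕ) :
    fairBinomialLT (n + 1) m ≤ fairBinomialLT (n + 1) (m - 1) := by
  rcases m with _ | m
  · rfl
  · rw [fairBinomialLT_succ_succ, Nat.add_sub_cancel]
    linarith [monotone_fairBinomialLT m n.le_succ]

lemma fairBinomialLT_pred_le_fairBinomialLT_succ (n m : ℕ) :
    fairBinomialLT n (m - 1) ≤ fairBinomialLT (n + 1) m := by
  rcases m with _ | m
  · exact monotone_fairBinomialLT 0 n.le_succ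
  · rw [fairBinomialLT_succ_succ, Nat.add_sub_cancel]
    linarith [monotone_fairBinomialLT m n.le_succ]

lemma centralBinom_sq_mul_le (n : ℕ) : n.centralBinom ^ 2 * (2 * n + 1) ≤ 16 ^ n := by
  induction n with
  | zero => simp
  | succ n ih =>
    have hsucc := Nat.succ_mul_centralBinom_succ n
    refine Nat.le_of_mul_le_mul_left ?_ (show 0 < (n + 1) ^ 2 by positivity)
    calc (n + 1) ^ 2 * ((n + 1).centralBinom ^ 2 * (2 * (n + 1) + 1))
        = ((n + 1) * (n + 1).centralBinom) ^ 2 * (2 * n + 3) := by ring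
      _ = n.centralBinom ^ 2 * (2 * n + 1) * (4 * (2 * n + 1) * (2 * n + 3)) := by rw [hsucc]; ring
      _ ≤ 16 ^ n * ((n + 1) ^ 2 * 16) := by gcongr ?_ * ?_; nlinarith
      _ = (n + 1) ^ 2 * 16 ^ (n + 1) := by ring

lemma two_mul_choose_le_centralBinom_succ (n i : ℕ) :
    2 * (2 * n + 1).choose i ≤ (n + 1).centralBinom := by
  have hmid := Nat.choose_le_middle i (2 * n + 1)
  rw [show (2 * n + 1) / 2 = n by lia] at hmid
  rw [Nat.centralBinom_eq_two_mul_choose, show 2 * (n + 1) = 2 * n + 1 + 1 by ring,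
    Nat.choose_succ_succ, Nat.succ_eq_add_one, Nat.choose_symm_half]
  lia

lemma choose_sq_mul_succ_le (n i : ℕ) : n.choose i ^ 2 * (n + 1) ≤ 4 ^ n := by
  obtain ⟨j, rfl | rfl⟩ := n.even_or_odd'
  · calc (2 * j).choose i ^ 2 * (2 * j + 1)
        ≤ j.centralBinom ^ 2 * (2 * j + 1) := by gcongr; exact Nat.choose_le_centralBinom i j
      _ ≤ 16 ^ j := centralBinom_sq_mul_le j
      _ = 4 ^ (2 * j) := by rw [pow_mul]; norm_num
  · refine Nat.le_of_mul_le_mul_left ?_ four_pos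
    calc 4 * ((2 * j + 1).choose i ^ 2 * (2 * j + 1 + 1))
        = (2 * (2 * j + 1).choose i) ^ 2 * (2 * j + 2) := by ring
      _ ≤ (j + 1).centralBinom ^ 2 * (2 * (j + 1) + 1) := by
          gcongr ?_ ^ 2 * ?_
          · exact two_mul_choose_le_centralBinom_succ j i
          · lia
      _ ≤ 16 ^ (j + 1) := centralBinom_sq_mul_le (j + 1)
      _ = 4 * 4 ^ (2 * j + 1) := by
          rw [← pow_succ', show 2 * j + 1 + 1 = 2 * (j + 1) by ring, pow_mul]
          norm_num

lemma choose_div_two_pow_le (m i : ℕ) : (m.choose i : ℝ) / 2 ^ m ≤ 1 / √(m + 1) := by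
  rw [div_le_div_iff₀ (by positivity) (by positivity), one_mul]
  refine le_of_sq_le_sq ?_ (by positivity)
  rw [mul_pow, Real.sq_sqrt (by positivity), ← pow_mul, mul_comm m, pow_mul]
  exact_mod_cast choose_sq_mul_succ_le m i

lemma fairBinomialLT_add_sub_le (n t m : ℕ) :
    fairBinomialLT (n + t) m - fairBinomialLT n m ≤ t / √(m + 1) := by
  rw [fairBinomialLT, fairBinomialLT, ← sub_div, sum_range_add, add_sub_cancel_left, sum_div]
  calc ∑ i ∈ range t, (m.choose (n + i) : ℝ) / 2 ^ m
      ≤ ∑ _i ∈ range t, 1 / √((m : ℝ) + 1) := sum_le_sum fun i _ => choose_div_two_pow_le m (n + i)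
    _ = t / √(m + 1) := by rw [sum_const, card_range, nsmul_eq_mul, mul_one_div]

lemma fairBinomialLT_add_sub_le_max (n t m : ℕ) :
    fairBinomialLT (n + t) m - fairBinomialLT n m ≤ t / √((max n m : ℕ) + 1) := by
  rcases lt_or_ge m n with h | h
  · rw [fairBinomialLT_eq_one h, fairBinomialLT_eq_one (h.trans_le (Nat.le_add_right n t)),
      sub_self]
    positivity
  · rw [max_eq_right h]
    exact fairBinomialLT_add_sub_le n t m

end FairBinomial

section RandomVectors

variable {K V α ι : Type*} [Field K] [AddCommGroup V] [Module K V] [Fintype α] [Fintype ι]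
  [DecidableEq ι]

lemma dens_not_isGenericAt_le {x : α → V} {n : ℕ} {δ : ℚ≥0}
    (hδ : ∀ W : Submodule K V, Module.finrank K W < n → dens {a | x a ∈ W} ≤ δ)
    {X : Finset ι} (hX : #X < n) :
    dens {y : ι → α | ¬ IsGenericAt K (x ∘ y) X} ≤ Fintype.card ι * δ := by
  have hunion : ({y : ι → α | ¬ IsGenericAt K (x ∘ y) X} : Finset (ι → α)) = univ.biUnion fun i =>
      {y | x (y i) ∈ Submodule.span K ((x ∘ y) '' (X \ {i}))} := by
    ext y
    simp [IsGenericAt]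
  have hspan : ∀ i : ι,
      dens {y : ι → α | x (y i) ∈ Submodule.span K ((x ∘ y) '' (X \ {i}))} ≤ δ := fun i => by
    refine dens_filter_le_of_forall_update i fun y => ?_
    have himage : ∀ a, (x ∘ Function.update y i a) '' (X \ {i}) = (x ∘ y) '' (X \ {i}) := fun a =>
      Set.image_congr fun j hj => by simp [Function.update_of_ne hj.2]
    simp only [Function.update_self, himage]
    refine hδ _ (lt_of_le_of_lt ?_ hX)
    rw [← coe_erase, ← coe_image]
    exact (finrank_span_finset_le_card _).trans (card_image_le.trans (card_erase_le))
  rw [hunion]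
  calc _ ≤ ∑ _i : ι, δ := dens_biUnion_le.trans (sum_le_sum fun i _ => hspan i)
    _ = Fintype.card ι * δ := by simp

variable [LinearOrder K] [InvolutiveNeg α] {x : α → V}

-- `y ↦ A.piecewise y (-y)` is an involution.
lemma card_filter_mem_signPatterns_comp (hx : x.Odd) (A : Finset ι) :
    #{y : ι → α | A ∈ signPatterns K (x ∘ y)} = #{y : ι → α | InOpenHalfSpace K (x ∘ y)} := by
  have hinv : Function.Involutive fun y : ι → α => A.piecewise y (-y) := fun y => by
    ext i
    by_cases hi : i ∈ A <;> simp [hi]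
  have hcomp : ∀ y : ι → α, A.piecewise (x ∘ y) (-(x ∘ y)) = x ∘ A.piecewise y (-y) := fun y => by
    ext i
    by_cases hi : i ∈ A <;> simp [hi, hx (y i)]
  simp only [mem_signPatterns, hcomp, card_filter]
  exact hinv.bijective.sum_comp fun y => if InOpenHalfSpace K (x ∘ y) then 1 else 0

lemma sum_card_signPatterns_comp (hx : x.Odd) :
    ∑ y : ι → α, #(signPatterns K (x ∘ y)) =
      2 ^ Fintype.card ι * #{y : ι → α | InOpenHalfSpace K (x ∘ y)} := by
  have hswap := sum_card_bipartiteAbove_eq_sum_card_bipartiteBelow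
    (s := (univ : Finset (ι → α))) (t := univ) fun y A => A ∈ signPatterns K (x ∘ y)
  simpa [bipartiteAbove, bipartiteBelow, card_filter_mem_signPatterns_comp hx] using hswap

variable [IsStrictOrderedRing K]

lemma dens_inOpenHalfSpace_le [FiniteDimensional K V] (hx : x.Odd) :
    (dens {y : ι → α | InOpenHalfSpace K (x ∘ y)} : ℝ) ≤
      fairBinomialLT (Module.finrank K V + 1) (Fintype.card ι) := by
  have hcount : 2 ^ Fintype.card ι * #{y : ι → α | InOpenHalfSpace K (x ∘ y)} ≤
      (∑ i ∈ range (Module.finrank K V + 1), (Fintype.card ι).choose i) *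
        Fintype.card (ι → α) := by
    rw [← sum_card_signPatterns_comp hx, mul_comm, ← smul_eq_mul, ← card_univ]
    exact sum_le_card_nsmul _ _ _ fun y _ => card_signPatterns_le (x ∘ y)
  rw [nnratCast_dens]
  refine div_le_of_le_mul₀ (Nat.cast_nonneg _) (by unfold fairBinomialLT; positivity) ?_
  rw [fairBinomialLT, div_mul_eq_mul_div, le_div_iff₀' (by positivity)]
  exact_mod_cast hcount

lemma sum_card_isGenericAt_le (hx : x.Odd) (n : ℕ) :
    ∑ X : Finset ι with #X < n, #{y : ι → α | IsGenericAt K (x ∘ y) X} ≤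
      2 ^ Fintype.card ι * #{y : ι → α | InOpenHalfSpace K (x ∘ y)} := by
  have hswap := sum_card_bipartiteAbove_eq_sum_card_bipartiteBelow
    (s := (univ : Finset (ι → α))) (t := univ) fun y (X : Finset ι) => IsGenericAt K (x ∘ y) X
  calc ∑ X : Finset ι with #X < n, #{y : ι → α | IsGenericAt K (x ∘ y) X}
      ≤ ∑ X : Finset ι, #{y : ι → α | IsGenericAt K (x ∘ y) X} :=
        sum_le_sum_of_subset (subset_univ _)
    _ = ∑ y : ι → α, #{X : Finset ι | IsGenericAt K (x ∘ y) X} := hswap.symm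
    _ ≤ ∑ y : ι → α, #(signPatterns K (x ∘ y)) :=
        sum_le_sum fun y _ => card_filter_isGenericAt_le (x ∘ y)
    _ = _ := sum_card_signPatterns_comp hx

lemma le_dens_inOpenHalfSpace [Nonempty α] (hx : x.Odd) {n : ℕ} {δ : ℚ≥0}
    (hδ : ∀ W : Submodule K V, Module.finrank K W < n → dens {a | x a ∈ W} ≤ δ) :
    fairBinomialLT n (Fintype.card ι) - Fintype.card ι * δ ≤
      (dens {y : ι → α | InOpenHalfSpace K (x ∘ y)} : ℝ) := by
  have hN : (0 : ℝ) < Fintype.card (ι → α) := by exact_mod_cast Fintype.card_pos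
  have hgeneric : ∀ X : Finset ι, #X < n → (1 - Fintype.card ι * δ : ℝ) * Fintype.card (ι → α) ≤
      #{y : ι → α | IsGenericAt K (x ∘ y) X} := fun X hX => by
    have hadd := dens_filter_add_dens_filter_not_eq_dens (s := (univ : Finset (ι → α)))
      fun y => IsGenericAt K (x ∘ y) X
    rw [dens_univ] at hadd
    have hle : (1 : ℚ≥0) ≤ dens {y : ι → α | IsGenericAt K (x ∘ y) X} + Fintype.card ι * δ :=
      hadd.ge.trans (by gcongr; exact dens_not_isGenericAt_le hδ hX)
    rw [← le_div_iff₀ hN, ← nnratCast_dens, sub_le_iff_le_add]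
    exact_mod_cast hle
  have hsum : (∑ i ∈ range n, ((Fintype.card ι).choose i : ℝ)) *
      ((1 - Fintype.card ι * δ) * Fintype.card (ι → α)) ≤
        #{y : ι → α | InOpenHalfSpace K (x ∘ y)} * 2 ^ Fintype.card ι := by
    calc _ = ∑ X : Finset ι with #X < n, (1 - Fintype.card ι * δ : ℝ) * Fintype.card (ι → α) := by
          rw [sum_const, card_filter_card_lt, nsmul_eq_mul, Nat.cast_sum]
      _ ≤ ∑ X : Finset ι with #X < n, (#{y : ι → α | IsGenericAt K (x ∘ y) X} : ℝ) :=
          sum_le_sum fun X hX => hgeneric X (mem_filter.1 hX).2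
      _ ≤ _ := by rw [mul_comm]; exact_mod_cast sum_card_isGenericAt_le hx n
  calc fairBinomialLT n (Fintype.card ι) - Fintype.card ι * δ
      ≤ fairBinomialLT n (Fintype.card ι) * (1 - Fintype.card ι * δ) := by
        have hδ : (0 : ℝ) ≤ Fintype.card ι * δ := by positivity
        linarith [mul_le_of_le_one_left hδ (fairBinomialLT_le_one n (Fintype.card ι))]
    _ ≤ dens {y : ι → α | InOpenHalfSpace K (x ∘ y)} := by
        rw [nnratCast_dens, le_div_iff₀ hN, fairBinomialLT, mul_assoc, div_mul_eq_mul_div]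
        exact (div_le_iff₀ (by positivity)).2 hsum

end RandomVectors

section Separation

variable {E ι : Type*} [AddCommGroup E] [Module ℝ E] [TopologicalSpace E]

lemma apply_eq_zero_of_forall_mem_le {W : Submodule ℝ E} {f : E →L[ℝ] ℝ} {b : ℝ}
    (hf : ∀ w ∈ W, b ≤ f w) {w : E} (hw : w ∈ W) : f w = 0 := by
  by_contra hne
  have hscaled := hf (((b - 1) / f w) • w) (W.smul_mem _ hw)
  rw [map_smul, smul_eq_mul, div_mul_cancel₀ _ hne] at hscaled
  linarith

variable [IsTopologicalAddGroup E] [ContinuousSMul ℝ E] [LocallyConvexSpace ℝ E]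

lemma disjoint_convexHull_range_submodule_iff [Finite ι] {W : Submodule ℝ E}
    (hW : IsClosed (W : Set E)) (v : ι → E) :
    Disjoint (convexHull ℝ (Set.range v)) (W : Set E) ↔ InOpenHalfSpace ℝ (W.mkQ ∘ v) := by
  constructor
  · intro hdisj
    obtain ⟨f, u, b, hfu, hub, hfb⟩ := geometric_hahn_banach_compact_closed
      (convex_convexHull ℝ _) ((Set.finite_range v).isCompact_convexHull ℝ) W.convex hW hdisj
    have hfW : ∀ w ∈ W, f w = 0 := fun w =>
      apply_eq_zero_of_forall_mem_le fun w' hw' => (hfb w' hw').le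
    have hb : b < 0 := by simpa using hfb 0 W.zero_mem
    refine ⟨W.liftQ (-f : E →ₗ[ℝ] ℝ) fun w hw => by simp [hfW w hw], fun i => ?_⟩
    have hvi : f (v i) < u := hfu _ (subset_convexHull ℝ _ ⟨i, rfl⟩)
    simp only [Function.comp_apply, Submodule.mkQ_apply, Submodule.liftQ_apply,
      LinearMap.neg_apply, ContinuousLinearMap.coe_coe]
    linarith
  · rintro ⟨g, hg⟩
    have hpos : convexHull ℝ (Set.range v) ⊆ {x | 0 < (g ∘ₗ W.mkQ) x} :=
      convexHull_min (Set.range_subset_iff.2 hg)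
        (convex_halfSpace_gt (𝕜 := ℝ) (g ∘ₗ W.mkQ).isLinear 0)
    refine Set.disjoint_left.2 fun x hx hxW => ?_
    have hgx : 0 < (g ∘ₗ W.mkQ) x := hpos hx
    refine hgx.ne' ?_
    rw [LinearMap.comp_apply, Submodule.mkQ_apply, (Submodule.Quotient.mk_eq_zero W).2 hxW,
      map_zero]

end Separation

section Cube

variable {κ ι : Type*}

/-- The vertex of the cube `[-1, 1]^κ` with the given signs. -/
def signVec (w : κ → ℤˣ) : κ → ℝ :=
  fun j => ((w j : ℤ) : ℝ)

lemma intCast_units_injective : Function.Injective fun s : ℤˣ => ((s : ℤ) : ℝ) :=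
  Int.cast_injective.comp Units.val_injective

lemma signVec_injective : Function.Injective (signVec (κ := κ)) :=
  intCast_units_injective.comp_left

lemma signVec_odd : (signVec (κ := κ)).Odd := fun w => by
  ext j
  simp [signVec]

/-- `signVec w` modulo the diagonal `ℝ · 𝟙`. -/
def signVecModOne (w : κ → ℤˣ) : (κ → ℝ) ⧸ Submodule.span ℝ {(1 : κ → ℝ)} :=
  (Submodule.span ℝ {(1 : κ → ℝ)}).mkQ (signVec w)

lemma signVecModOne_odd : (signVecModOne (κ := κ)).Odd := fun w => by
  rw [signVecModOne, signVec_odd, map_neg, signVecModOne]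

lemma signVec_one (k : ℕ) : signVec 1 = allOne k := by
  ext j
  simp [signVec, allOne]

lemma signVec_mem_Icc (w : κ → ℤˣ) : signVec w ∈ Set.Icc (-1 : κ → ℝ) 1 := by
  refine ⟨fun j => ?_, fun j => ?_⟩ <;>
    rcases Int.units_eq_one_or (w j) with h | h <;> simp [signVec, h]

lemma pmCubeStar_eq_map (k : ℕ) :
    pmCubeStar k = ({1, -1}ᶜ : Finset (Fin k → ℤˣ)).map ⟨signVec, signVec_injective⟩ := by
  have hcube : pmCube k = univ.map ⟨signVec, signVec_injective⟩ := by
    ext x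
    simp only [pmCube, mem_image, mem_univ, true_and, Finset.mem_map, Function.Embedding.coeFn_mk]
    constructor
    · rintro ⟨f, rfl⟩
      exact ⟨fun j => if f j then 1 else -1, by ext j; by_cases h : f j <;> simp [signVec, h]⟩
    · rintro ⟨w, rfl⟩
      refine ⟨fun j => w j = 1, ?_⟩
      ext j
      rcases Int.units_eq_one_or (w j) with h | h <;> simp [signVec, h]
  rw [pmCubeStar, hcube, compl_eq_univ_sdiff, Finset.map_sdiff, map_insert, map_singleton,
    Function.Embedding.coeFn_mk, signVec_odd, signVec_one, pair_comm]

lemma span_one_inter_Icc_subset_segment :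
    (Submodule.span ℝ {(1 : κ → ℝ)} : Set (κ → ℝ)) ∩ Set.Icc (-1) 1 ⊆ segment ℝ (-1) 1 := by
  rintro _ ⟨hspan, hIcc⟩
  obtain ⟨c, rfl⟩ := Submodule.mem_span_singleton.1 hspan
  rcases isEmpty_or_nonempty κ with hκ | ⟨⟨j⟩⟩
  · rw [Subsingleton.elim (c • 1) (1 : κ → ℝ)]
    exact right_mem_segment ℝ _ _
  have hlower : -1 ≤ c := by simpa using hIcc.1 j
  have hupper : c ≤ 1 := by simpa using hIcc.2 j
  refine ⟨(1 - c) / 2, (1 + c) / 2, by linarith, by linarith, by ring, ?_⟩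
  ext j
  simp only [Pi.add_apply, Pi.smul_apply, Pi.neg_apply, Pi.one_apply, smul_eq_mul]
  ring

lemma convexHull_inter_segment_eq_empty_iff [Finite ι] (y : ι → κ → ℤˣ) :
    convexHull ℝ (Set.range (signVec ∘ y)) ∩ segment ℝ (-1) 1 = ∅ ↔
      InOpenHalfSpace ℝ (signVecModOne ∘ y) := by
  have hone : (1 : κ → ℝ) ∈ Submodule.span ℝ {(1 : κ → ℝ)} := Submodule.mem_span_singleton_self 1
  have hcube : convexHull ℝ (Set.range (signVec ∘ y)) ⊆ Set.Icc (-1) 1 :=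
    convexHull_min (Set.range_subset_iff.2 fun i => signVec_mem_Icc (y i)) (convex_Icc _ _)
  have hsegment : segment ℝ (-1) 1 ⊆ (Submodule.span ℝ {(1 : κ → ℝ)} : Set (κ → ℝ)) :=
    (Submodule.convex _).segment_subset (neg_mem hone) hone
  rw [← Set.disjoint_iff_inter_eq_empty]
  refine Iff.trans ?_ (disjoint_convexHull_range_submodule_iff
    (Submodule.closed_of_finiteDimensional _) (signVec ∘ y))
  refine ⟨fun h => Set.disjoint_left.2 fun x hx hspan => ?_, fun h => h.mono_right hsegment⟩
  exact Set.disjoint_left.1 h hx (span_one_inter_Icc_subset_segment ⟨hspan, hcube hx⟩)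

end Cube

lemma finrank_comap_le_add_finrank_ker {K V V' : Type*} [Field K] [AddCommGroup V] [Module K V]
    [AddCommGroup V'] [Module K V'] [FiniteDimensional K V] [FiniteDimensional K V']
    (f : V →ₗ[K] V') (W : Submodule K V') :
    Module.finrank K (W.comap f) ≤ Module.finrank K W + Module.finrank K f.ker := by
  set g : W.comap f →ₗ[K] V' := f ∘ₗ (W.comap f).subtype with hg
  have hrange : g.range ≤ W := by
    rintro _ ⟨w, rfl⟩
    exact w.2
  have hker : Module.finrank K g.ker ≤ Module.finrank K f.ker := by
    rw [hg, LinearMap.ker_comp, ← Submodule.finrank_map_subtype_eq]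
    exact Submodule.finrank_mono (Submodule.map_comap_le _ _)
  rw [← g.finrank_range_add_finrank_ker]
  exact Nat.add_le_add (Submodule.finrank_mono hrange) hker

section CubeProbability

variable {κ : Type*} [Fintype κ] [Nonempty κ]

lemma finrank_quotient_span_one :
    Module.finrank ℝ ((κ → ℝ) ⧸ Submodule.span ℝ {(1 : κ → ℝ)}) + 1 = Fintype.card κ := by
  rw [← finrank_span_singleton (K := ℝ) (one_ne_zero (α := κ → ℝ)),
    Submodule.finrank_quotient_add_finrank, Module.finrank_fintype_fun_eq_card]

lemma dens_signVecModOne_mem_le [DecidableEq κ]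
    {W : Submodule ℝ ((κ → ℝ) ⧸ Submodule.span ℝ {(1 : κ → ℝ)})} {t : ℕ}
    (hW : Module.finrank ℝ W + t < Fintype.card κ) :
    dens {w : κ → ℤˣ | signVecModOne w ∈ W} ≤ ((2 : ℚ≥0) ^ t)⁻¹ := by
  let U := W.comap (Submodule.span ℝ {(1 : κ → ℝ)}).mkQ
  have hfinrank : Module.finrank ℝ U ≤ Module.finrank ℝ W + 1 := by
    have hcomap := finrank_comap_le_add_finrank_ker (Submodule.span ℝ {(1 : κ → ℝ)}).mkQ W
    rwa [Submodule.ker_mkQ, finrank_span_singleton one_ne_zero] at hcomap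
  have hcard : #{w : κ → ℤˣ | signVecModOne w ∈ W} ≤ 2 ^ Module.finrank ℝ U :=
    card_filter_comp_mem_le intCast_units_injective U
  have hpow : #{w : κ → ℤˣ | signVecModOne w ∈ W} * 2 ^ t ≤ 2 ^ Fintype.card κ := by
    calc _ ≤ 2 ^ Module.finrank ℝ U * 2 ^ t := Nat.mul_le_mul_right _ hcard
      _ = 2 ^ (Module.finrank ℝ U + t) := (pow_add _ _ _).symm
      _ ≤ 2 ^ Fintype.card κ := Nat.pow_le_pow_right two_pos (by omega)
  rw [dens_eq_card_div_card, Fintype.card_fun, Fintype.card_units_int, ← one_div,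
    div_le_div_iff₀ (by positivity) (by positivity), one_mul]
  exact_mod_cast hpow

/-- The probability that `m` independent uniformly random vertices of the cube `[-1, 1]^k`, taken
modulo `ℝ · 𝟙`, lie in a common open half-space. -/
def cubeHalfSpaceProb (k m : ℕ) : ℝ :=
  dens {y : Fin m → Fin k → ℤˣ | InOpenHalfSpace ℝ (signVecModOne ∘ y)}

lemma cubeHalfSpaceProb_le {k : ℕ} (hk : 1 ≤ k) (m : ℕ) :
    cubeHalfSpaceProb k m ≤ fairBinomialLT k m := by
  have : NeZero k := ⟨by omega⟩
  have hle := dens_inOpenHalfSpace_le (ι := Fin m) (K := ℝ) (signVecModOne_odd (κ := Fin k))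
  rwa [finrank_quotient_span_one, Fintype.card_fin, Fintype.card_fin] at hle

lemma le_cubeHalfSpaceProb {k : ℕ} (hk : 1 ≤ k) (m t : ℕ) :
    fairBinomialLT (k - t) m - m / 2 ^ t ≤ cubeHalfSpaceProb k m := by
  have : NeZero k := ⟨by omega⟩
  have hδ : ∀ W : Submodule ℝ ((Fin k → ℝ) ⧸ Submodule.span ℝ {(1 : Fin k → ℝ)}),
      Module.finrank ℝ W < k - t →
        dens {w : Fin k → ℤˣ | signVecModOne w ∈ W} ≤ ((2 : ℚ≥0) ^ t)⁻¹ := fun W hW =>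
    dens_signVecModOne_mem_le (by rw [Fintype.card_fin]; omega)
  have hle := le_dens_inOpenHalfSpace (ι := Fin m) signVecModOne_odd hδ
  rwa [Fintype.card_fin, NNRat.cast_inv, NNRat.cast_pow, NNRat.cast_ofNat,
    ← div_eq_mul_inv] at hle

end CubeProbability

section RandomSubset

variable {α ι : Type*} [Fintype α] [Fintype ι] [DecidableEq α] [DecidableEq ι]

lemma card_filter_image_eq {Y : Finset α} (hY : #Y = Fintype.card ι) :
    #{y : ι → α | univ.image y = Y} = (Fintype.card ι).factorial := by
  have hcard : Fintype.card (ι ↪ Y) = (Fintype.card ι).factorial := by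
    rw [Fintype.card_embedding_eq, Fintype.card_coe, hY, Nat.descFactorial_self]
  rw [← hcard, ← card_univ]
  symm
  refine card_bij (fun e _ i => (e i : α)) (fun e _ => ?_) (fun e _ e' _ h => ?_) fun y hy => ?_
  · refine mem_filter.2 ⟨mem_univ _, eq_of_subset_of_card_le ?_ ?_⟩
    · exact image_subset_iff.2 fun i _ => (e i).2
    · exact (hY.trans (card_image_of_injective univ
        (Subtype.val_injective.comp e.injective)).symm).le
  · exact DFunLike.ext _ _ fun i => Subtype.ext (congrFun h i)
  · obtain rfl := (mem_filter.1 hy).2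
    have hinj : y.Injective := by
      rw [← Set.injOn_univ, ← coe_univ]
      exact card_image_iff.1 hY
    exact ⟨⟨fun i => ⟨y i, mem_image_of_mem y (mem_univ i)⟩,
      fun i j h => hinj (congrArg Subtype.val h)⟩, mem_univ _, rfl⟩

lemma card_filter_image_mem {𝒴 : Finset (Finset α)} (h𝒴 : ∀ Y ∈ 𝒴, #Y = Fintype.card ι) :
    #{y : ι → α | univ.image y ∈ 𝒴} = #𝒴 * (Fintype.card ι).factorial := by
  rw [card_eq_sum_card_fiberwise (f := fun y : ι → α => univ.image y) (t := 𝒴)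
    fun y hy => mem_coe.2 (mem_filter.1 (mem_coe.1 hy)).2]
  refine sum_const_nat fun Y hY => ?_
  rw [← card_filter_image_eq (h𝒴 Y hY), filter_filter]
  congr 1
  exact filter_congr fun y _ => and_iff_right_of_imp fun h => (congrArg (· ∈ 𝒴) h).mpr hY

lemma dens_compl_filter_image_mem_powersetCard_le (T : Finset α) :
    dens ({y | univ.image y ∈ powersetCard (Fintype.card ι) T} : Finset (ι → α))ᶜ ≤
      Fintype.card ι * (dens Tᶜ + Fintype.card ι / Fintype.card α) := by
  have hunion : ({y | univ.image y ∈ powersetCard (Fintype.card ι) T} : Finset (ι → α))ᶜ ⊆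
      univ.biUnion fun i => {y | y i ∈ Tᶜ ∪ (univ.erase i).image y} := by
    intro y hy
    contrapose! hy
    simp only [mem_biUnion, mem_filter, mem_univ, true_and, not_exists, mem_union, mem_compl,
      mem_image, mem_erase, not_or, not_and, not_not, and_true] at hy
    have hinj : y.Injective := fun i j hij => by
      by_contra hne
      exact (hy i).2 j (Ne.symm hne) hij.symm
    simp only [mem_compl, mem_filter, mem_univ, true_and, not_not, mem_powersetCard,
      card_image_of_injective _ hinj, card_univ, and_true, image_subset_iff]
    exact fun i _ => (hy i).1
  have hcoord : ∀ i, dens {y : ι → α | y i ∈ Tᶜ ∪ (univ.erase i).image y} ≤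
      dens Tᶜ + Fintype.card ι / Fintype.card α := fun i => by
    refine dens_filter_le_of_forall_update i fun y => ?_
    have himage : ∀ a, (univ.erase i).image (Function.update y i a) = (univ.erase i).image y :=
      fun a => image_congr fun j hj => Function.update_of_ne (ne_of_mem_erase hj) _ _
    simp only [Function.update_self, himage, filter_univ_mem]
    refine (dens_union_le _ _).trans ?_
    rw [dens_eq_card_div_card ((univ.erase i).image y)]
    gcongr
    exact card_image_le.trans (card_erase_le)
  calc _ ≤ _ := dens_le_dens hunion
    _ ≤ ∑ _i : ι, (dens Tᶜ + Fintype.card ι / Fintype.card α : ℚ≥0) :=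
        dens_biUnion_le.trans (sum_le_sum fun i _ => hcoord i)
    _ = _ := by rw [sum_const, card_univ, nsmul_eq_mul]

lemma abs_card_inter_div_card_sub_dens_le (G E : Finset α) :
    |(#(G ∩ E) / #G : ℝ) - dens E| ≤ dens Gᶜ := by
  rcases isEmpty_or_nonempty α with hα | hα
  · rw [Subsingleton.elim G ∅, Subsingleton.elim E ∅]
    simp
  have hN : (0 : ℝ) < Fintype.card α := by exact_mod_cast Fintype.card_pos
  have hsplit : (#(G ∩ E) : ℝ) + #(Gᶜ ∩ E) = #E := by
    rw [inter_comm G, inter_comm Gᶜ, ← sdiff_eq_inter_compl]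
    exact_mod_cast card_inter_add_card_sdiff E G
  have hcompl : (#(G) : ℝ) + #Gᶜ = Fintype.card α := by exact_mod_cast card_add_card_compl G
  have hcond : (#(G ∩ E) / #G : ℝ) * #G = #(G ∩ E) := div_mul_cancel_of_imp fun h => by
    simp [card_eq_zero.1 (Nat.cast_eq_zero.1 h)]
  have hle : (#(G ∩ E) / #G : ℝ) ≤ 1 :=
    div_le_one_of_le₀ (by exact_mod_cast card_le_card inter_subset_left) (Nat.cast_nonneg _)
  have hdiff : (#(G ∩ E) / #G : ℝ) - dens E =
      (#(G ∩ E) / #G * #Gᶜ - #(Gᶜ ∩ E)) / Fintype.card α := by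
    rw [nnratCast_dens, eq_div_iff hN.ne', sub_mul, div_mul_cancel₀ _ hN.ne', ← hcompl, mul_add,
      hcond, ← hsplit]
    ring
  have hinter : (#(Gᶜ ∩ E) : ℝ) ≤ #Gᶜ := by exact_mod_cast card_le_card inter_subset_left
  rw [hdiff, nnratCast_dens, abs_div, Nat.abs_cast]
  gcongr
  exact abs_sub_le_of_nonneg_of_le (by positivity)
    (mul_le_of_le_one_left (Nat.cast_nonneg _) hle) (Nat.cast_nonneg _) hinter

lemma abs_card_filter_powersetCard_div_sub_dens_le (T : Finset α) (P : Finset α → Prop)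
    [DecidablePred P] :
    |(#{Y ∈ powersetCard (Fintype.card ι) T | P Y} / #(powersetCard (Fintype.card ι) T) : ℝ) -
        dens {y : ι → α | P (univ.image y)}| ≤
      Fintype.card ι * (dens Tᶜ + Fintype.card ι / Fintype.card α) := by
  set 𝒯 := powersetCard (Fintype.card ι) T with h𝒯
  have hsize : ∀ Y ∈ 𝒯, #Y = Fintype.card ι := fun Y hY => (mem_powersetCard.1 hY).2
  set G : Finset (ι → α) := {y | univ.image y ∈ 𝒯} with hG
  have hinter : G ∩ ({y | P (univ.image y)} : Finset (ι → α)) =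
      ({y | univ.image y ∈ 𝒯.filter P} : Finset (ι → α)) := by
    ext y
    simp [hG]
  have hcond : (#{Y ∈ 𝒯 | P Y} / #𝒯 : ℝ) =
      #(G ∩ ({y | P (univ.image y)} : Finset (ι → α))) / #G := by
    rw [hinter, hG, card_filter_image_mem hsize,
      card_filter_image_mem fun Y hY => hsize Y (mem_filter.1 hY).1, Nat.cast_mul, Nat.cast_mul,
      mul_div_mul_right _ _ (by exact_mod_cast (Nat.factorial_pos _).ne')]
  rw [hcond]
  refine (abs_card_inter_div_card_sub_dens_le _ _).trans ?_
  rw [hG, h𝒯]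
  simpa only [NNRat.cast_mul, NNRat.cast_add, NNRat.cast_div, NNRat.cast_natCast] using
    (NNRat.cast_le (K := ℝ)).2 (dens_compl_filter_image_mem_powersetCard_le (ι := ι) T)

end RandomSubset

section Tau

-- The filter in `tau` runs over the image of `powersetCard` in `Set (Fin k → ℝ)`.
lemma tau_eq_card_div_card (k m : ℕ) :
    tau k m = #((powersetCard m (pmCubeStar k)).filter fun Y : Finset (Fin k → ℝ) =>
      convexHull ℝ (Y : Set (Fin k → ℝ)) ∩ segment ℝ (-allOne k) (allOne k) = ∅) /
        #(powersetCard m (pmCubeStar k)) := by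
  rw [tau]
  congr 2
  symm
  refine card_bij (fun (Y : Finset (Fin k → ℝ)) _ => (Y : Set (Fin k → ℝ)))
    (fun Y hY => ?_) (fun Y _ Y' _ h => coe_injective h) fun Z hZ => ?_
  · simpa using hY
  · simp only [Finset.bind_def, mem_filter, Finset.mem_sup, pure_def, mem_singleton] at hZ
    obtain ⟨⟨Y, hY, rfl⟩, hdisj⟩ := hZ
    exact ⟨Y, mem_filter.2 ⟨hY, hdisj⟩, rfl⟩

lemma tau_eq_card_filter_signVec_div_card (k m : ℕ) :
    tau k m = #((powersetCard m {1, -1}ᶜ).filter fun Y : Finset (Fin k → ℤˣ) =>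
      convexHull ℝ (signVec '' (Y : Set (Fin k → ℤˣ))) ∩ segment ℝ (-1) 1 = ∅) /
        #(powersetCard m ({1, -1}ᶜ : Finset (Fin k → ℤˣ))) := by
  rw [tau_eq_card_div_card, pmCubeStar_eq_map, powersetCard_map, filter_map, card_map, card_map]
  simp only [Function.comp_def, RelEmbedding.coe_toEmbedding, mapEmbedding_apply, coe_map]
  rfl

lemma abs_tau_sub_cubeHalfSpaceProb_le (k m : ℕ) :
    |tau k m - cubeHalfSpaceProb k m| ≤ 3 * m ^ 2 / 2 ^ k := by
  have hle := abs_card_filter_powersetCard_div_sub_dens_le (ι := Fin m) {1, -1}ᶜ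
    fun Y : Finset (Fin k → ℤˣ) =>
      convexHull ℝ (signVec '' (Y : Set (Fin k → ℤˣ))) ∩ segment ℝ (-1) 1 = ∅
  simp only [Fintype.card_fin, ← tau_eq_card_filter_signVec_div_card, coe_image, coe_univ,
    Set.image_univ, ← Set.range_comp, convexHull_inter_segment_eq_empty_iff, compl_compl] at hle
  rw [nnratCast_dens ({1, -1} : Finset _), Fintype.card_fun, Fintype.card_fin,
    Fintype.card_units_int, Nat.cast_pow, Nat.cast_ofNat, ← add_div, ← mul_div_assoc] at hle
  have hm : (m : ℝ) ≤ m ^ 2 := by exact_mod_cast Nat.le_self_pow two_ne_zero m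
  have hpair : (#({1, -1} : Finset (Fin k → ℤˣ)) : ℝ) ≤ 2 := by exact_mod_cast card_le_two
  refine hle.trans (div_le_div_of_nonneg_right ?_ (by positivity))
  linarith [mul_le_mul_of_nonneg_left hpair (Nat.cast_nonneg m)]

end Tau

section Limits

lemma abs_cubeHalfSpaceProb_sub_le {k m t : ℕ} (hk : 2 ≤ k) (ht : 1 ≤ t)
    (hle : t ^ 4 ≤ max k m) (hge : max k m ≤ (t + 1) ^ 4) :
    |cubeHalfSpaceProb k m - fairBinomialLT (k - 1) (m - 1)| ≤
      2 / t + ((t + 1 : ℕ) : ℝ) ^ 4 / 2 ^ t := by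
  have hk1 : 1 ≤ k := one_le_two.trans hk
  have hlower : fairBinomialLT (k - t) m ≤ fairBinomialLT (k - 1) (m - 1) :=
    (monotone_fairBinomialLT m (by lia : k - t ≤ k - 2 + 1)).trans <|
      (fairBinomialLT_succ_le_fairBinomialLT_pred (k - 2) m).trans_eq <|
        congrArg (fairBinomialLT · (m - 1)) (by lia)
  have hupper : fairBinomialLT (k - 1) (m - 1) ≤ fairBinomialLT k m :=
    (fairBinomialLT_pred_le_fairBinomialLT_succ (k - 1) m).trans_eq <|
      congrArg (fairBinomialLT · m) (Nat.sub_add_cancel hk1)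
  have hgap : fairBinomialLT k m - fairBinomialLT (k - t) m ≤ 2 / t := by
    have hsq : (t : ℝ) ^ 2 / 2 ≤ √((max (k - t) m : ℕ) + 1) := by
      have hmax : (t : ℝ) ^ 4 ≤ (max (k - t) m : ℕ) + t := by exact_mod_cast (by lia)
      refine Real.le_sqrt_of_sq_le ?_
      nlinarith [sq_nonneg ((t : ℝ) ^ 2 - 1), sq_nonneg ((t : ℝ) - 1)]
    have hmono := monotone_fairBinomialLT m (by lia : k ≤ k - t + t)
    have : (0 : ℝ) < t := by exact_mod_cast ht
    calc fairBinomialLT k m - fairBinomialLT (k - t) m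
        ≤ t / √((max (k - t) m : ℕ) + 1) :=
          (sub_le_sub_right hmono _).trans (fairBinomialLT_add_sub_le_max _ _ _)
      _ ≤ t / ((t : ℝ) ^ 2 / 2) := by gcongr
      _ = 2 / t := by field_simp
  have hm : (m : ℝ) / 2 ^ t ≤ ((t + 1 : ℕ) : ℝ) ^ 4 / 2 ^ t := by
    gcongr
    exact_mod_cast (le_max_right _ _).trans hge
  have hpos : (0 : ℝ) ≤ m / 2 ^ t := by positivity
  rw [abs_le]
  constructor <;> linarith [cubeHalfSpaceProb_le hk1 m, le_cubeHalfSpaceProb hk1 m t]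

lemma tendsto_two_div_add_pow_four_div_two_pow :
    Tendsto (fun t : ℕ => 2 / t + ((t + 1 : ℕ) : ℝ) ^ 4 / 2 ^ t) atTop (nhds 0) := by
  have hpow := ((tendsto_pow_const_div_const_pow_of_one_lt 4 (one_lt_two (α := ℝ))).comp
    (tendsto_add_atTop_nat 1)).const_mul 2
  have hsum := (tendsto_const_div_atTop_nhds_zero_nat (2 : ℝ)).add hpow
  rw [mul_zero, add_zero] at hsum
  refine hsum.congr fun t => ?_
  rw [Function.comp_apply, pow_succ (2 : ℝ) t, mul_div_assoc', mul_comm (2 : ℝ),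
    mul_div_mul_right _ _ two_ne_zero]

lemma tendsto_nat_sqrt_atTop : Tendsto Nat.sqrt atTop atTop :=
  tendsto_atTop_atTop.2 fun b => ⟨b ^ 2, fun _ ha => Nat.le_sqrt'.2 ha⟩

lemma tendsto_cubeHalfSpaceProb_sub_fairBinomialLT (m : ℕ → ℕ) :
    Tendsto (fun k => cubeHalfSpaceProb k (m k) - fairBinomialLT (k - 1) (m k - 1))
      atTop (nhds 0) := by
  -- For `t ≈ (max k (m k)) ^ (1 / 4)`, both `t / √(max k (m k))` and `m k / 2 ^ t` tend to `0`.
  let t : ℕ → ℕ := fun k => Nat.sqrt (Nat.sqrt (max k (m k)))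
  have ht : Tendsto t atTop atTop := tendsto_nat_sqrt_atTop.comp <| tendsto_nat_sqrt_atTop.comp <|
    tendsto_atTop_mono (fun k => le_max_left k (m k)) tendsto_id
  refine squeeze_zero_norm' ?_ (tendsto_two_div_add_pow_four_div_two_pow.comp ht)
  filter_upwards [eventually_ge_atTop 2, ht.eventually_ge_atTop 1] with k hk ht1
  refine abs_cubeHalfSpaceProb_sub_le hk ht1 ?_ ?_
  · calc t k ^ 4 = (t k ^ 2) ^ 2 := by ring
      _ ≤ Nat.sqrt (max k (m k)) ^ 2 := Nat.pow_le_pow_left (Nat.sqrt_le' _) 2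
      _ ≤ max k (m k) := Nat.sqrt_le' _
  · calc max k (m k) ≤ (Nat.sqrt (max k (m k)) + 1) ^ 2 := (Nat.lt_succ_sqrt' _).le
      _ ≤ ((t k + 1) ^ 2) ^ 2 := Nat.pow_le_pow_left (Nat.lt_succ_sqrt' _) 2
      _ = (t k + 1) ^ 4 := by ring

lemma sq_div_two_pow_eq_sq (a : ℝ) (k : ℕ) :
    a ^ 2 / 2 ^ k = (a / (2 : ℝ) ^ ((k : ℝ) / 2)) ^ 2 := by
  rw [div_pow, ← Real.rpow_mul_natCast zero_le_two, Nat.cast_ofNat, div_mul_cancel₀ _ two_ne_zero,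
    Real.rpow_natCast]

lemma tendsto_tau_sub_cubeHalfSpaceProb {m : ℕ → ℕ}
    (hm : Tendsto (fun k => (m k : ℝ) / (2 : ℝ) ^ ((k : ℝ) / 2)) atTop (nhds 0)) :
    Tendsto (fun k => tau k (m k) - cubeHalfSpaceProb k (m k)) atTop (nhds 0) := by
  have hlim := (hm.pow 2).const_mul 3
  rw [zero_pow two_ne_zero, mul_zero] at hlim
  refine squeeze_zero_norm (fun k => ?_) hlim
  rw [← sq_div_two_pow_eq_sq, ← mul_div_assoc]
  exact abs_tau_sub_cubeHalfSpaceProb_le k (m k)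

lemma bFn_div_two_pow_eq_fairBinomialLT (n m : ℕ) :
    (bFn n m : ℝ) / 2 ^ m = fairBinomialLT (n + 1) m := by
  rw [bFn, fairBinomialLT, Nat.cast_sum]

end Limits

-- STATEMENT 14
theorem statement14 (m : ℕ → ℕ)
    (hm : Tendsto (fun k => (m k : ℝ) / (2 : ℝ) ^ ((k : ℝ) / 2)) atTop (nhds 0)) :
    Tendsto (fun k => tau k (m k) - (bFn (k - 2) (m k - 1) : ℝ) / 2 ^ (m k - 1))
      atTop (nhds 0) := by
  have hlim := (tendsto_tau_sub_cubeHalfSpaceProb hm).add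
    (tendsto_cubeHalfSpaceProb_sub_fairBinomialLT m)
  rw [add_zero] at hlim
  refine hlim.congr' ?_
  filter_upwards [eventually_ge_atTop 2] with k hk
  rw [bFn_div_two_pow_eq_fairBinomialLT, show k - 2 + 1 = k - 1 by lia, sub_add_sub_cancel]

end
end
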